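/- arXiv:2603.00752 — 3 statements merged into one kernel-verified Lean document; each statement's English description precedes it below -/
import Mathlib

section
/- Let K be a field and S = K[x_1,…,x_n]. Let G_0 be a finite simple graph on vertex set [n−1], let F_0 be a star graph on [n] with center n, let s ≥ 2 be an integer, and let H_0 be the graph on [n] with edge set E(G_0) ∪ E(F_0). Assume: (1) for every pair of integers i ≥ 1 and j ≥ 0 with i + j = s, the ideal I_{G_0}^i · I_{F_0}^j has linear quotients; and (2) every edge of G_0 shares a vertex with some edge of F_0. Then I_{H_0}^s has linear quotients. Moreover, a linear quotient ordering of I_{H_0}^s is obtained by concatenating linear quotient orderings O_s, O_{s−1}, …, O_1, O_0, where O_j is a linear quotient ordering of the minimal generators of I_{G_0}^{s−j} I_{F_0}^j for 0 ≤ j ≤ s−1 and O_s is a linear quotient ordering of the minimal generators of I_{F_0}^s. -/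
open MvPolynomial

noncomputable section

/-- The edge ideal of a finite simple graph on vertex set `Fin n`
(vertex with index `v` corresponds to the vertex `v+1` of `[n]`). -/
def edgeIdeal (K : Type*) [Field K] {n : ℕ} (G : SimpleGraph (Fin n)) :
    Ideal (MvPolynomial (Fin n) K) :=
  Ideal.span {p | ∃ i j : Fin n, G.Adj i j ∧ p = X i * X j}

/-- `d` is the exponent vector of a minimal monomial generator of `I`. -/
def IsMinGen {K : Type*} [Field K] {n : ℕ} (I : Ideal (MvPolynomial (Fin n) K))
    (d : Fin n →₀ ℕ) : Prop :=
  monomial d (1 : K) ∈ I ∧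
    ∀ e : Fin n →₀ ℕ, e ≤ d → e ≠ d → monomial e (1 : K) ∉ I

/-- A list of exponent vectors `L = [d_1, …, d_r]` is a linear quotient ordering if
for every `i ≥ 2` the colon ideal `(x^{d_1}, …, x^{d_{i-1}}) : x^{d_i}` is generated
by a subset of the variables. -/
def IsLinQuotOrder (K : Type*) [Field K] {n : ℕ} (L : List (Fin n →₀ ℕ)) : Prop :=
  ∀ i : Fin L.length, 0 < i.val →
    ∃ V : Set (Fin n),
      Submodule.colon
        (Ideal.span {m : MvPolynomial (Fin n) K |
          ∃ k : Fin L.length, k.val < i.val ∧ m = monomial (L.get k) 1})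
        (Ideal.span {monomial (L.get i) (1 : K)}) =
      Ideal.span ((fun v : Fin n => (X v : MvPolynomial (Fin n) K)) '' V)

/-- A monomial ideal has linear quotients if it is principal or admits a
linear quotient ordering of its minimal monomial generators. -/
def HasLinearQuotients {K : Type*} [Field K] {n : ℕ}
    (I : Ideal (MvPolynomial (Fin n) K)) : Prop :=
  (∃ p, I = Ideal.span {p}) ∨
    ∃ L : List (Fin n →₀ ℕ), L.Nodup ∧ (∀ d, d ∈ L ↔ IsMinGen I d) ∧ IsLinQuotOrder K L

/-- `lexLt d e` : the monomial `x^d` is lexicographically smaller than `x^e`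
for the lexicographic order induced by `x_n > x_{n-1} > … > x_1`. -/
def lexLt {n : ℕ} (d e : Fin n →₀ ℕ) : Prop :=
  ∃ k : Fin n, d k < e k ∧ ∀ m : Fin n, k < m → d m = e m

/-- `L` lists the minimal monomial generators of `I` in decreasing lexicographic order. -/
def LexDecMinGenOrder {K : Type*} [Field K] {n : ℕ} (I : Ideal (MvPolynomial (Fin n) K))
    (L : List (Fin n →₀ ℕ)) : Prop :=
  List.Pairwise (fun d e => lexLt e d) L ∧ ∀ d, d ∈ L ↔ IsMinGen I d

/-- The anticycle on `[m]` : `{i,j}` is an edge iff `i ≠ j` and `i - j ≢ ±1 (mod m)`. -/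
def anticycle (m : ℕ) : SimpleGraph (Fin m) where
  Adj i j := i ≠ j ∧ (i.val + 1) % m ≠ j.val ∧ (j.val + 1) % m ≠ i.val
  symm := ⟨fun i j h => ⟨h.1.symm, h.2.2, h.2.1⟩⟩
  loopless := ⟨fun i h => h.1 rfl⟩

/-- The anticycle on `[m]` regarded as a graph on the vertex set `[n]`. -/
def anticycleIn (n m : ℕ) : SimpleGraph (Fin n) where
  Adj i j := i ≠ j ∧ i.val < m ∧ j.val < m ∧ (i.val + 1) % m ≠ j.val ∧ (j.val + 1) % m ≠ i.val
  symm := ⟨fun i j h => ⟨h.1.symm, h.2.2.1, h.2.1, h.2.2.2.2, h.2.2.2.1⟩⟩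
  loopless := ⟨fun i h => h.1 rfl⟩

/-- The star on `[n]` with edges `{i, n}` for `1 ≤ i ≤ n - 3`
(in the `0`-indexed picture: edges `{i, n-1}` for `i ≤ n - 4`). -/
def starF (n : ℕ) : SimpleGraph (Fin n) :=
  SimpleGraph.fromRel (fun i j => i.val + 4 ≤ n ∧ j.val = n - 1)

/-- `AgreeOrder n s i j t` : the degree-`s` monomials with ascending (0-indexed)
index sequences `i` and `j` agree in order `t`. -/
def AgreeOrder (n s : ℕ) (i j : ℕ → Fin n) (t : ℕ) : Prop :=
  if t = 0 then j (s - 1) < i (s - 1)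
  else (∀ l, s - t ≤ l → l ≤ s - 1 → i l = j l) ∧ i (s - t - 1) ≠ j (s - t - 1)

section Helpers
open scoped Pointwise

/-- combinatorial linear quotients -/
def LQ {n : ℕ} (L : List (Fin n →₀ ℕ)) : Prop :=
  ∀ A d B, L = A ++ d :: B → ∀ e ∈ A, ∃ f ∈ A, ∃ v : Fin n,
    f ≤ d + Finsupp.single v 1 ∧ d v < e v

theorem colon_iff {K : Type*} [Field K] {n : ℕ} (A : Set (Fin n →₀ ℕ)) (d : Fin n →₀ ℕ) :
    (∃ V : Set (Fin n), Submodule.colon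
        (Ideal.span ((fun e => monomial e (1 : K)) '' A))
        (Ideal.span {monomial d (1 : K)}) =
      Ideal.span ((fun v : Fin n => (X v : MvPolynomial (Fin n) K)) '' V)) ↔
    ∀ e ∈ A, ∃ f ∈ A, ∃ v : Fin n, f ≤ d + Finsupp.single v 1 ∧ d v < e v := by
  have key : ∀ m : Fin n →₀ ℕ, monomial m (1 : K) ∈ Submodule.colon
        (Ideal.span ((fun e => monomial e (1 : K)) '' A))
        (Ideal.span {monomial d (1 : K)}) ↔ ∃ e ∈ A, e ≤ m + d := by
    intro m
    rw [Ideal.mem_colon_span_singleton, monomial_mul, mem_ideal_span_monomial_image]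
    simp [support_monomial]
  constructor
  · rintro ⟨V, hV⟩ e he
    have h1 : monomial (e - d) (1 : K) ∈ Submodule.colon
        (Ideal.span ((fun e => monomial e (1 : K)) '' A))
        (Ideal.span {monomial d (1 : K)}) := (key _).2 ⟨e, he, le_tsub_add⟩
    rw [hV, mem_ideal_span_X_image] at h1
    obtain ⟨v, hv, hv'⟩ := h1 (e - d) (by simp [support_monomial])
    have h2 : monomial (Finsupp.single v 1) (1 : K) ∈ Submodule.colon
        (Ideal.span ((fun e => monomial e (1 : K)) '' A))
        (Ideal.span {monomial d (1 : K)}) := by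
      rw [hV]; exact Ideal.subset_span ⟨v, hv, rfl⟩
    obtain ⟨f, hf, hfd⟩ := (key _).1 h2
    refine ⟨f, hf, v, by rwa [add_comm], ?_⟩
    simp at hv'
    omega
  · intro h
    refine ⟨{v | ∃ f ∈ A, f ≤ d + Finsupp.single v 1}, le_antisymm ?_ ?_⟩
    · intro q hq
      rw [Ideal.mem_colon_span_singleton, mem_ideal_span_monomial_image] at hq
      rw [mem_ideal_span_X_image]
      intro m hm
      obtain ⟨e, he, hem⟩ := hq (m + d) (by
        rw [mem_support_iff, coeff_mul_monomial]
        simpa using hm)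
      obtain ⟨f, hf, v, hfv, hv⟩ := h e he
      refine ⟨v, ⟨f, hf, hfv⟩, ?_⟩
      have := hem v
      simp at this
      omega
    · rw [Ideal.span_le]
      rintro _ ⟨v, ⟨f, hf, hfv⟩, rfl⟩
      exact (key (Finsupp.single v 1)).2 ⟨f, hf, by rwa [add_comm]⟩

theorem linQuot_iff (K : Type*) [Field K] {n : ℕ} (L : List (Fin n →₀ ℕ)) :
    IsLinQuotOrder K L ↔ LQ L := by
  have hset : ∀ i : Fin L.length, {m : MvPolynomial (Fin n) K |
          ∃ k : Fin L.length, k.val < i.val ∧ m = monomial (L.get k) 1} =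
        (fun e => monomial e (1 : K)) '' {e | e ∈ L.take i} := by
    intro i
    ext m
    simp only [Set.mem_ofPred_eq, Set.mem_image, List.mem_take_iff_getElem]
    constructor
    · rintro ⟨k, hk, rfl⟩
      exact ⟨_, ⟨k, by omega, rfl⟩, rfl⟩
    · rintro ⟨_, ⟨k, hk, rfl⟩, rfl⟩
      exact ⟨⟨k, by omega⟩, by simp; omega, rfl⟩
  unfold IsLinQuotOrder
  simp_rw [hset, colon_iff]
  constructor
  · rintro h A d B rfl e he
    have hpos := List.length_pos_of_mem he
    have := h ⟨A.length, by simp⟩ hpos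
    simp at this
    exact this e he
  · intro h i _ 
    exact h (L.take i) (L.get i) (L.drop (i+1)) (by simp)

theorem LQ.append {n : ℕ} {L M : List (Fin n →₀ ℕ)} (hL : LQ L) (hM : LQ M)
    (h : ∀ d ∈ M, ∀ e ∈ L, ∃ f ∈ L, ∃ v : Fin n, f ≤ d + Finsupp.single v 1 ∧ d v < e v) :
    LQ (L ++ M) := by
  intro A d B hAB e he
  rcases List.append_eq_append_iff.1 hAB with ⟨C, rfl, rfl⟩ | ⟨C, rfl, hC⟩
  · rcases List.mem_append.1 he with he | he
    · obtain ⟨f, hf, r⟩ := h d (by simp) e he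
      exact ⟨f, by simp [hf], r⟩
    · obtain ⟨f, hf, r⟩ := hM C d B rfl e he
      exact ⟨f, by simp [hf], r⟩
  · cases C with
    | nil =>
      simp at hC
      subst hC
      simpa using h d (by simp) e (by simpa using he)
    | cons c C =>
      simp at hC
      obtain ⟨rfl, rfl⟩ := hC
      exact hL A d C rfl e he

theorem LQ.nil {n : ℕ} : LQ ([] : List (Fin n →₀ ℕ)) := by
  intro A d B h
  simp at h

theorem LQ.singleton {n : ℕ} (a : Fin n →₀ ℕ) : LQ [a] := by
  intro A d B h
  cases A with
  | nil => simp
  | cons x A => simp at h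

theorem LQ.shift {n : ℕ} {L : List (Fin n →₀ ℕ)} (hL : LQ L) (c : Fin n →₀ ℕ) :
    LQ (L.map (fun d => d + c)) := by
  intro A d B h e he
  rw [List.map_eq_append_iff] at h
  obtain ⟨A', M, rfl, rfl, h⟩ := h
  rw [List.map_eq_cons_iff] at h
  obtain ⟨d', B', rfl, rfl, rfl⟩ := h
  obtain ⟨e', he', rfl⟩ := List.mem_map.1 he
  obtain ⟨f, hf, v, h1, h2⟩ := hL A' d' B' rfl e' he'
  refine ⟨f + c, List.mem_map.2 ⟨f, hf, rfl⟩, v, ?_, by simpa using h2⟩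
  rw [add_right_comm]
  gcongr

/-- powers of monomial primes -/
theorem exists_prime_power {n : ℕ} (A : Finset (Fin n)) (s : ℕ) :
    ∃ L : List (Fin n →₀ ℕ), L.Nodup ∧
      (∀ d, d ∈ L ↔ d.degree = s ∧ d.support ⊆ A) ∧ LQ L := by
  induction A using Finset.induction_on generalizing s with
  | empty =>
    cases s with
    | zero =>
      refine ⟨[0], by simp, ?_, LQ.singleton 0⟩
      intro d
      simp [Finsupp.degree_eq_zero_iff]
    | succ s =>
      refine ⟨[], by simp, ?_, LQ.nil⟩
      intro d
      simp
      rintro h rfl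
      simp at h
  | insert a A ha ih =>
    induction s with
    | zero =>
      refine ⟨[0], by simp, ?_, LQ.singleton 0⟩
      intro d
      simp only [List.mem_singleton, Finsupp.degree_eq_zero_iff]
      constructor
      · rintro rfl; simp
      · exact fun h => h.1
    | succ s ihs =>
      obtain ⟨L, hL1, hL2, hL3⟩ := ihs
      obtain ⟨M, hM1, hM2, hM3⟩ := ih (s + 1)
      have hMa : ∀ d ∈ M, d a = 0 := by
        intro d hd
        by_contra h
        exact ha (((hM2 d).1 hd).2 (by simpa using h))
      refine ⟨L.map (fun d => d + Finsupp.single a 1) ++ M, ?_, ?_, ?_⟩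
      · rw [List.nodup_append']
        refine ⟨hL1.map (add_left_injective _), hM1, ?_⟩
        intro d hd hd'
        obtain ⟨d', _, rfl⟩ := List.mem_map.1 hd
        have := hMa _ hd'
        simp at this
      · intro d
        simp only [List.mem_append, List.mem_map, hL2, hM2]
        constructor
        · rintro (⟨d', ⟨h1, h2⟩, rfl⟩ | ⟨h1, h2⟩)
          · refine ⟨by simp [h1], ?_⟩
            refine Finsupp.support_add.trans (Finset.union_subset h2 ?_)
            exact Finsupp.support_single_subset.trans (by simp)
          · exact ⟨h1, h2.trans (Finset.subset_insert _ _)⟩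
        · rintro ⟨h1, h2⟩
          by_cases hda : d a = 0
          · right
            refine ⟨h1, fun x hx => ?_⟩
            rcases Finset.mem_insert.1 (h2 hx) with rfl | h
            · simp [hda] at hx
            · exact h
          · left
            have hle : Finsupp.single a 1 ≤ d := by
              rw [Finsupp.single_le_iff]; omega
            have hs : d - Finsupp.single a 1 + Finsupp.single a 1 = d := tsub_add_cancel_of_le hle
            refine ⟨d - Finsupp.single a 1, ⟨?_, ?_⟩, hs⟩
            · rw [← hs] at h1
              simpa using h1
            · intro x hx
              apply h2
              simp at hx ⊢
              omega
      · refine (hL3.shift _).append hM3 ?_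
        intro d hd e he
        obtain ⟨e', he', rfl⟩ := List.mem_map.1 he
        have hd' := (hM2 d).1 hd
        have hd0 : d ≠ 0 := by
          rintro rfl
          simp at hd'
        obtain ⟨b, hb⟩ := Finsupp.ne_iff.1 hd0
        have hle : Finsupp.single b 1 ≤ d := by
          rw [Finsupp.single_le_iff]; simp at hb; omega
        have hs : d - Finsupp.single b 1 + Finsupp.single b 1 = d := tsub_add_cancel_of_le hle
        refine ⟨d - Finsupp.single b 1 + Finsupp.single a 1,
          List.mem_map.2 ⟨_, (hL2 _).2 ⟨?_, ?_⟩, rfl⟩, a, ?_, ?_⟩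
        · have := hd'.1
          rw [← hs] at this
          simpa using this
        · intro x hx
          apply Finset.mem_insert_of_mem
          apply hd'.2
          simp at hx ⊢
          omega
        · gcongr
          exact tsub_le_self
        · rw [hMa d hd]; simp

/-- exponents of edges -/
def Ed {n : ℕ} (G : SimpleGraph (Fin n)) : Set (Fin n →₀ ℕ) :=
  {d | ∃ i j, G.Adj i j ∧ d = Finsupp.single i 1 + Finsupp.single j 1}

/-- span of monomials -/
def mspan (K : Type*) [Field K] {n : ℕ} (A : Set (Fin n →₀ ℕ)) :
    Ideal (MvPolynomial (Fin n) K) :=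
  Ideal.span ((fun e => monomial e (1 : K)) '' A)

theorem edgeIdeal_eq (K : Type*) [Field K] {n : ℕ} (G : SimpleGraph (Fin n)) :
    edgeIdeal K G = mspan K (Ed G) := by
  unfold edgeIdeal mspan
  congr 1
  ext p
  constructor
  · rintro ⟨i, j, h, rfl⟩
    exact ⟨_, ⟨i, j, h, rfl⟩, by simp [X, monomial_mul]⟩
  · rintro ⟨_, ⟨i, j, h, rfl⟩, rfl⟩
    exact ⟨i, j, h, by simp [X, monomial_mul]⟩

theorem mspan_mul (K : Type*) [Field K] {n : ℕ} (A B : Set (Fin n →₀ ℕ)) :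
    mspan K A * mspan K B = mspan K (A + B) := by
  unfold mspan
  rw [Ideal.span_mul_span']
  congr 1
  ext p
  constructor
  · rintro ⟨_, ⟨a, ha, rfl⟩, _, ⟨b, hb, rfl⟩, rfl⟩
    exact ⟨_, ⟨a, ha, b, hb, rfl⟩, by simp [monomial_mul]⟩
  · rintro ⟨_, ⟨a, ha, b, hb, rfl⟩, rfl⟩
    exact ⟨_, ⟨a, ha, rfl⟩, _, ⟨b, hb, rfl⟩, by simp [monomial_mul]⟩

theorem mspan_pow (K : Type*) [Field K] {n : ℕ} (A : Set (Fin n →₀ ℕ)) (s : ℕ) :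
    mspan K A ^ s = mspan K (s • A) := by
  induction s with
  | zero =>
    simp only [pow_zero, zero_nsmul, mspan]
    rw [eq_comm, Ideal.one_eq_top, Ideal.eq_top_iff_one]
    exact Ideal.subset_span ⟨0, by simp, by simp⟩
  | succ s ih => rw [pow_succ, ih, mspan_mul, succ_nsmul]

theorem mem_mspan {K : Type*} [Field K] {n : ℕ} {A : Set (Fin n →₀ ℕ)} {d : Fin n →₀ ℕ} :
    monomial d (1 : K) ∈ mspan K A ↔ ∃ e ∈ A, e ≤ d := by
  unfold mspan
  rw [mem_ideal_span_monomial_image]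
  simp [support_monomial]

theorem eq_of_le_degree {n : ℕ} {d e : Fin n →₀ ℕ} (h : e ≤ d) (hd : e.degree = d.degree) :
    e = d := by
  obtain ⟨c, rfl⟩ := exists_add_of_le h
  have : c.degree = 0 := by
    rw [map_add] at hd; omega
  rw [Finsupp.degree_eq_zero_iff] at this
  simp [this]

theorem isMinGen_mspan {K : Type*} [Field K] {n : ℕ} {A : Set (Fin n →₀ ℕ)} {N : ℕ}
    (hA : ∀ d ∈ A, d.degree = N) (d : Fin n →₀ ℕ) : IsMinGen (mspan K A) d ↔ d ∈ A := by
  unfold IsMinGen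
  simp_rw [mem_mspan]
  constructor
  · rintro ⟨⟨e, he, hed⟩, h⟩
    by_contra hd
    exact h e hed (by rintro rfl; exact hd he) ⟨e, he, le_rfl⟩
  · intro hd
    refine ⟨⟨d, hd, le_rfl⟩, ?_⟩
    rintro e hed hne ⟨f, hf, hfe⟩
    have := eq_of_le_degree (hfe.trans hed) (by rw [hA _ hf, hA _ hd])
    subst this
    exact hne (le_antisymm hed hfe)

theorem principal_mspan {K : Type*} [Field K] {n : ℕ} {A : Set (Fin n →₀ ℕ)} {N : ℕ}
    (hA : ∀ d ∈ A, d.degree = N) (p : MvPolynomial (Fin n) K)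
    (hp : mspan K A = Ideal.span {p}) (d e : Fin n →₀ ℕ) (hd : d ∈ A) (he : e ∈ A) : d = e := by
  have hpm : p ∈ mspan K A := by rw [hp]; exact Ideal.mem_span_singleton_self p
  have key : ∀ d ∈ A, ∃ c : K, monomial d (1 : K) = p * C c := by
    intro d hd
    have h1 : monomial d (1 : K) ∈ mspan K A := mem_mspan.2 ⟨d, hd, le_rfl⟩
    rw [hp, Ideal.mem_span_singleton] at h1
    obtain ⟨q, hq⟩ := h1
    have hne : p * q ≠ 0 := by
      rw [← hq]; simp
    have hdeg := totalDegree_mul_of_isDomain (left_ne_zero_of_mul hne) (right_ne_zero_of_mul hne)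
    rw [← hq, totalDegree_monomial _ one_ne_zero] at hdeg
    change d.degree = _ at hdeg
    rw [hA d hd] at hdeg
    have hN : N ≤ p.totalDegree := by
      obtain ⟨m, hm⟩ := support_nonempty.2 (left_ne_zero_of_mul hne)
      unfold mspan at hpm
      rw [mem_ideal_span_monomial_image] at hpm
      obtain ⟨f, hf, hfm⟩ := hpm m hm
      rw [← hA f hf]
      exact (Finsupp.degree_mono hfm).trans (le_totalDegree hm)
    have hq0 : q.totalDegree = 0 := by omega
    rw [totalDegree_eq_zero_iff_eq_C] at hq0
    exact ⟨_, by rw [hq, ← hq0]⟩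
  obtain ⟨c, hc⟩ := key d hd
  obtain ⟨c', hc'⟩ := key e he
  have h3 : monomial d c' = monomial e c := by
    calc monomial d c' = monomial d (1 : K) * C c' := by rw [mul_comm, C_mul_monomial, mul_one]
      _ = monomial e (1 : K) * C c := by rw [hc, hc']; ring
      _ = monomial e c := by rw [mul_comm, C_mul_monomial, mul_one]
  rw [monomial_eq_monomial_iff] at h3
  rcases h3 with ⟨h, _⟩ | ⟨h, _⟩
  · exact h
  · subst h
    simp at hc'

/-- generators of the products -/
def PE {n : ℕ} (G F : SimpleGraph (Fin n)) (i j : ℕ) : Set (Fin n →₀ ℕ) := i • Ed G + j • Ed F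

theorem prod_eq (K : Type*) [Field K] {n : ℕ} (G F : SimpleGraph (Fin n)) (i j : ℕ) :
    edgeIdeal K G ^ i * edgeIdeal K F ^ j = mspan K (PE G F i j) := by
  rw [edgeIdeal_eq, edgeIdeal_eq, mspan_pow, mspan_pow, mspan_mul, PE]

theorem hom_nsmul {n : ℕ} (φ : (Fin n →₀ ℕ) →+ ℕ) {A : Set (Fin n →₀ ℕ)} {k : ℕ}
    (h : ∀ d ∈ A, φ d = k) (s : ℕ) : ∀ d ∈ s • A, φ d = s * k := by
  induction s with
  | zero =>
    intro d hd
    simp at hd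
    simp [hd]
  | succ s ih =>
    intro d hd
    rw [succ_nsmul] at hd
    obtain ⟨a, ha, b, hb, rfl⟩ := hd
    simp only [map_add, ih a ha, h b hb]
    ring

theorem PE_degree {n : ℕ} (G F : SimpleGraph (Fin n)) (i j : ℕ) :
    ∀ d ∈ PE G F i j, d.degree = 2 * (i + j) := by
  have h : ∀ G : SimpleGraph (Fin n), ∀ d ∈ Ed G, d.degree = 2 := by
    rintro G _ ⟨i, j, _, rfl⟩
    simp
  rintro _ ⟨a, ha, b, hb, rfl⟩
  simp only [map_add, hom_nsmul _ (h G) _ a ha, hom_nsmul _ (h F) _ b hb]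
  ring

theorem PE_center {n : ℕ} {G F : SimpleGraph (Fin n)} {c : Fin n}
    (hG : ∀ i j, G.Adj i j → i ≠ c ∧ j ≠ c) (hF : ∀ i j, F.Adj i j → i = c ∨ j = c) (i j : ℕ) :
    ∀ d ∈ PE G F i j, d c = j := by
  have h1 : ∀ d ∈ Ed G, Finsupp.applyAddHom c d = 0 := by
    rintro _ ⟨i, j, h, rfl⟩
    have := hG i j h
    simp [this.1, this.2, Finsupp.single_apply]
  have h2 : ∀ d ∈ Ed F, Finsupp.applyAddHom c d = 1 := by
    rintro _ ⟨i, j, h, rfl⟩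
    have h' := h.ne
    rcases hF i j h with rfl | rfl
    · simp [Finsupp.single_apply, h'.symm]
    · simp [Finsupp.single_apply, h']
  rintro _ ⟨a, ha, b, hb, rfl⟩
  have h3 := hom_nsmul _ h1 _ a ha
  have h4 := hom_nsmul _ h2 _ b hb
  simp at h3 h4 ⊢
  omega

theorem PE_cross {n : ℕ} {G F : SimpleGraph (Fin n)} {c : Fin n}
    (hGF : ∀ i j, G.Adj i j → F.Adj i c ∨ F.Adj j c) (i j : ℕ) (d : Fin n →₀ ℕ)
    (hd : d ∈ PE G F (i + 1) j) :
    ∃ f ∈ PE G F i (j + 1), f ≤ d + Finsupp.single c 1 := by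
  obtain ⟨a, ha, b, hb, rfl⟩ := hd
  rw [succ_nsmul] at ha
  obtain ⟨a, ha, _, ⟨u, v, huv, rfl⟩, rfl⟩ := ha
  have hE : ∀ w, F.Adj w c → a + (b + (Finsupp.single w 1 + Finsupp.single c 1)) ∈
      PE G F i (j + 1) := by
    intro w hw
    refine ⟨a, ha, _, ?_, rfl⟩
    rw [succ_nsmul]
    exact ⟨b, hb, _, ⟨w, c, hw, rfl⟩, rfl⟩
  rcases hGF u v huv with h | h
  · refine ⟨_, hE u h, ?_⟩
    intro x
    simp
    omega
  · refine ⟨_, hE v h, ?_⟩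
    intro x
    simp
    omega

theorem Ed_sup {n : ℕ} (G F : SimpleGraph (Fin n)) : Ed (G ⊔ F) = Ed G ∪ Ed F := by
  ext d
  constructor
  · rintro ⟨i, j, h | h, rfl⟩
    · exact Or.inl ⟨i, j, h, rfl⟩
    · exact Or.inr ⟨i, j, h, rfl⟩
  · rintro (⟨i, j, h, rfl⟩ | ⟨i, j, h, rfl⟩)
    · exact ⟨i, j, Or.inl h, rfl⟩
    · exact ⟨i, j, Or.inr h, rfl⟩

theorem mem_sup_nsmul {n : ℕ} (G F : SimpleGraph (Fin n)) (s : ℕ) (d : Fin n →₀ ℕ) :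
    d ∈ s • Ed (G ⊔ F) ↔ ∃ i j, i + j = s ∧ d ∈ PE G F i j := by
  constructor
  · induction s generalizing d with
    | zero =>
      intro h
      refine ⟨0, 0, rfl, ?_⟩
      simpa [PE] using h
    | succ s ih =>
      intro h
      rw [succ_nsmul] at h
      obtain ⟨a, ha, b, hb, rfl⟩ := h
      obtain ⟨i, j, rfl, x, hx, y, hy, rfl⟩ := ih a ha
      rw [Ed_sup] at hb
      rcases hb with hb | hb
      · refine ⟨i + 1, j, by ring, x + b, ?_, y, hy, add_right_comm _ _ _⟩
        rw [succ_nsmul]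
        exact ⟨x, hx, b, hb, rfl⟩
      · refine ⟨i, j + 1, by ring, x, hx, y + b, ?_, (add_assoc _ _ _).symm⟩
        rw [succ_nsmul]
        exact ⟨y, hy, b, hb, rfl⟩
  · rintro ⟨i, j, rfl, x, hx, y, hy, rfl⟩
    rw [add_nsmul, Ed_sup]
    exact ⟨x, Set.nsmul_subset_nsmul_left (Set.subset_union_left) hx, y,
      Set.nsmul_subset_nsmul_left (Set.subset_union_right) hy, rfl⟩

theorem sup_pow_eq (K : Type*) [Field K] {n : ℕ} (G F : SimpleGraph (Fin n)) (s : ℕ) :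
    edgeIdeal K (G ⊔ F) ^ s = mspan K {d | ∃ i j, i + j = s ∧ d ∈ PE G F i j} := by
  rw [edgeIdeal_eq, mspan_pow]
  congr 1
  ext d
  exact mem_sup_nsmul G F s d

theorem exists_star {n : ℕ} (G F : SimpleGraph (Fin n)) {c : Fin n}
    (hF : ∀ i j, F.Adj i j → i = c ∨ j = c) (s : ℕ) :
    ∃ L : List (Fin n →₀ ℕ), L.Nodup ∧ (∀ d, d ∈ L ↔ d ∈ PE G F 0 s) ∧ LQ L := by
  classical
  obtain ⟨L, h1, h2, h3⟩ := exists_prime_power (Finset.univ.filter (fun i => F.Adj i c)) s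
  refine ⟨L.map (fun d => d + s • Finsupp.single c 1), h1.map (add_left_injective _), ?_,
    h3.shift _⟩
  have hEd : Ed F = ((fun i : Fin n => Finsupp.single i 1) '' {i | F.Adj i c}) +
      {Finsupp.single c 1} := by
    ext d
    constructor
    · rintro ⟨i, j, h, rfl⟩
      rcases hF i j h with rfl | rfl
      · exact ⟨_, ⟨j, h.symm, rfl⟩, _, rfl, add_comm _ _⟩
      · exact ⟨_, ⟨i, h, rfl⟩, _, rfl, rfl⟩
    · rintro ⟨_, ⟨i, h, rfl⟩, _, rfl, rfl⟩
      exact ⟨i, c, h, rfl⟩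
  intro d
  rw [PE, hEd, nsmul_add, Set.nsmul_singleton, Finsupp.nsmul_single_one_image, zero_nsmul, zero_add]
  simp only [List.mem_map, h2, Set.add_singleton, Set.mem_image, Set.mem_ofPred_eq]
  have : ∀ d : Fin n →₀ ℕ, d.support ⊆ Finset.univ.filter (fun i => F.Adj i c) ↔
      (d.support : Set (Fin n)) ⊆ {i | F.Adj i c} := by
    intro d
    rw [← Finset.coe_subset]
    simp
  simp only [this]

theorem core {n : ℕ} {G F : SimpleGraph (Fin n)} {c : Fin n}
    (hG : ∀ i j, G.Adj i j → i ≠ c ∧ j ≠ c) (hF : ∀ i j, F.Adj i j → i = c ∨ j = c)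
    (hGF : ∀ i j, G.Adj i j → F.Adj i c ∨ F.Adj j c) (s : ℕ) (O : ℕ → List (Fin n →₀ ℕ))
    (hO : ∀ j, j ≤ s → (O j).Nodup ∧ (∀ d, d ∈ O j ↔ d ∈ PE G F (s - j) j) ∧ LQ (O j)) :
    ((List.range (s + 1)).reverse.map O).flatten.Nodup ∧
      (∀ d, d ∈ ((List.range (s + 1)).reverse.map O).flatten ↔
        ∃ i j, i + j = s ∧ d ∈ PE G F i j) ∧
      LQ ((List.range (s + 1)).reverse.map O).flatten := by
  have hc : ∀ j, j ≤ s → ∀ d ∈ O j, d c = j := fun j hj d hd =>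
    PE_center hG hF _ _ d (((hO j hj).2.1 d).1 hd)
  have hrev : (List.range (s + 1)).reverse.map O = (List.range (s + 1)).map (fun i => O (s - i)) := by
    apply List.ext_getElem
    · simp
    · intro i h1 h2
      simp
  have main : ∀ t, t ≤ s → ((List.range (t + 1)).map (fun i => O (s - i))).flatten.Nodup ∧
      LQ ((List.range (t + 1)).map (fun i => O (s - i))).flatten := by
    intro t
    induction t with
    | zero =>
      intro _
      simpa using ⟨(hO s le_rfl).1, (hO s le_rfl).2.2⟩
    | succ t ih =>
      intro ht
      obtain ⟨ih1, ih2⟩ := ih (by omega)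
      obtain ⟨h1, h2, h3⟩ := hO (s - (t + 1)) (by omega)
      have hgt : ∀ e ∈ ((List.range (t + 1)).map (fun i => O (s - i))).flatten,
          s - (t + 1) < e c := by
        intro e he
        simp only [List.mem_flatten, List.mem_map, List.mem_range] at he
        obtain ⟨_, ⟨i, hi, rfl⟩, he⟩ := he
        rw [hc _ (by omega) e he]
        omega
      rw [List.range_succ (n := t + 1), List.map_append, List.flatten_append]
      simp only [List.map_cons, List.map_nil, List.flatten_cons, List.flatten_nil, List.append_nil]
      constructor
      · rw [List.nodup_append']
        refine ⟨ih1, h1, ?_⟩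
        intro e he he'
        have := hgt e he
        rw [hc _ (by omega) e he'] at this
        omega
      · refine ih2.append h3 ?_
        intro d hd e he
        have hdP := (h2 d).1 hd
        rw [show s - (s - (t + 1)) = t + 1 by omega] at hdP
        obtain ⟨f, hf, hfd⟩ := PE_cross hGF _ _ d hdP
        refine ⟨f, ?_, c, hfd, ?_⟩
        · simp only [List.mem_flatten, List.mem_map, List.mem_range]
          refine ⟨_, ⟨t, by omega, rfl⟩, ?_⟩
          rw [(hO (s - t) (by omega)).2.1]
          rwa [show s - (s - t) = t by omega, show s - t = s - (t + 1) + 1 by omega]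
        · rw [hc _ (by omega) d hd]
          exact hgt e he
  obtain ⟨m1, m2⟩ := main s le_rfl
  rw [hrev]
  refine ⟨m1, ?_, m2⟩
  intro d
  rw [← hrev]
  simp only [List.mem_flatten, List.mem_map, List.mem_reverse, List.mem_range]
  constructor
  · rintro ⟨_, ⟨j, hj, rfl⟩, hd⟩
    exact ⟨s - j, j, by omega, ((hO j (by omega)).2.1 d).1 hd⟩
  · rintro ⟨i, j, rfl, hd⟩
    refine ⟨_, ⟨j, by omega, rfl⟩, ((hO j (by omega)).2.1 d).2 ?_⟩
    rwa [Nat.add_sub_cancel]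

theorem exists_order {K : Type*} [Field K] {n : ℕ} {A : Set (Fin n →₀ ℕ)} {N : ℕ}
    (hA : ∀ d ∈ A, d.degree = N) (h : HasLinearQuotients (mspan K A)) :
    ∃ L : List (Fin n →₀ ℕ), L.Nodup ∧ (∀ d, d ∈ L ↔ d ∈ A) ∧ LQ L := by
  rcases h with ⟨p, hp⟩ | ⟨L, h1, h2, h3⟩
  · rcases A.eq_empty_or_nonempty with rfl | ⟨a, ha⟩
    · exact ⟨[], by simp, by simp, LQ.nil⟩
    · refine ⟨[a], by simp, ?_, LQ.singleton a⟩
      intro d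
      rw [List.mem_singleton]
      constructor
      · rintro rfl; exact ha
      · intro hd
        exact principal_mspan hA p hp d a hd ha
  · exact ⟨L, h1, fun d => by rw [h2, isMinGen_mspan hA], (linQuot_iff K L).1 h3⟩

end Helpers

/-- Construction of composite linear quotient orderings (Lemma `lem-tech`):
if each product `I_{G₀}^i I_{F₀}^j` (`i ≥ 1`, `i + j = s`) has linear quotients and every
edge of `G₀` meets an edge of `F₀`, then `I_{H₀}^s` has linear quotients, and a linear
quotient ordering of `I_{H₀}^s` is obtained by concatenating linear quotient orderings
`O_s, O_{s-1}, …, O_0` of the minimal generators of the summands. -/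
theorem composite_linear_quotient_ordering
    (K : Type*) [Field K] (n : ℕ) (hn : 1 ≤ n) (s : ℕ) (hs : 2 ≤ s)
    (G0 F0 : SimpleGraph (Fin n))
    -- `G0` is a graph on `[n-1]` : no edge of `G0` touches the vertex `n`
    (hG0 : ∀ i j : Fin n, G0.Adj i j → i.val < n - 1 ∧ j.val < n - 1)
    -- `F0` is a star on `[n]` with center `n` : every edge of `F0` contains the vertex `n`
    (hF0 : ∀ i j : Fin n, F0.Adj i j → i.val = n - 1 ∨ j.val = n - 1)
    -- (1) each `I_{G0}^i I_{F0}^j`, `i ≥ 1`, `i + j = s`, has linear quotients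
    (h1 : ∀ i j : ℕ, 1 ≤ i → i + j = s →
      HasLinearQuotients (edgeIdeal K G0 ^ i * edgeIdeal K F0 ^ j))
    -- (2) every edge of `G0` shares a vertex with some edge of `F0`
    (h2 : ∀ i j : Fin n, G0.Adj i j →
      ∃ k l : Fin n, F0.Adj k l ∧ (i = k ∨ i = l ∨ j = k ∨ j = l)) :
    HasLinearQuotients (edgeIdeal K (G0 ⊔ F0) ^ s) ∧
    ∀ O : ℕ → List (Fin n →₀ ℕ),
      -- `O j` is a linear quotient ordering of the minimal generators of
      -- `I_{G0}^{s-j} I_{F0}^j` for `0 ≤ j ≤ s - 1` …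
      (∀ j : ℕ, j ≤ s - 1 →
        (O j).Nodup ∧
        (∀ d, d ∈ O j ↔ IsMinGen (edgeIdeal K G0 ^ (s - j) * edgeIdeal K F0 ^ j) d) ∧
        IsLinQuotOrder K (O j)) →
      -- … and `O s` is a linear quotient ordering of the minimal generators of `I_{F0}^s`
      ((O s).Nodup ∧
        (∀ d, d ∈ O s ↔ IsMinGen (edgeIdeal K F0 ^ s) d) ∧
        IsLinQuotOrder K (O s)) →
      -- then the concatenation `(O_s, O_{s-1}, …, O_1, O_0)` is a linear quotient
      -- ordering of the minimal generators of `I_{H0}^s`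
      (((List.range (s + 1)).reverse.map O).flatten.Nodup ∧
        (∀ d, d ∈ ((List.range (s + 1)).reverse.map O).flatten ↔
          IsMinGen (edgeIdeal K (G0 ⊔ F0) ^ s) d) ∧
        IsLinQuotOrder K ((List.range (s + 1)).reverse.map O).flatten) := by
  let c : Fin n := ⟨n - 1, by omega⟩
  have hG : ∀ i j, G0.Adj i j → i ≠ c ∧ j ≠ c := by
    intro i j h
    have := hG0 i j h
    constructor
    · rintro rfl
      exact absurd this.1 (lt_irrefl _)
    · rintro rfl
      exact absurd this.2 (lt_irrefl _)
  have hF : ∀ i j, F0.Adj i j → i = c ∨ j = c := by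
    intro i j h
    exact (hF0 i j h).imp (fun h => Fin.ext h) (fun h => Fin.ext h)
  have hGF : ∀ i j, G0.Adj i j → F0.Adj i c ∨ F0.Adj j c := by
    intro i j h
    obtain ⟨hi, hj⟩ := hG i j h
    obtain ⟨k, l, hkl, h'⟩ := h2 i j h
    have hlk := hkl.symm
    rcases hF k l hkl with h3 | h3 <;> subst h3 <;> rcases h' with h' | h' | h' | h' <;>
      subst h' <;>
      first
      | exact absurd rfl hi
      | exact absurd rfl hj
      | exact Or.inl hkl
      | exact Or.inl hlk
      | exact Or.inr hkl
      | exact Or.inr hlk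
  have hdeg : ∀ j, j ≤ s → ∀ d ∈ PE G0 F0 (s - j) j, d.degree = 2 * s := by
    intro j hj d hd
    rw [PE_degree G0 F0 _ _ d hd, Nat.sub_add_cancel hj]
  have hdegH : ∀ d ∈ {d | ∃ i j, i + j = s ∧ d ∈ PE G0 F0 i j}, d.degree = 2 * s := by
    rintro d ⟨i, j, rfl, hd⟩
    exact PE_degree G0 F0 _ _ d hd
  have hmin : ∀ d, IsMinGen (edgeIdeal K (G0 ⊔ F0) ^ s) d ↔
      ∃ i j, i + j = s ∧ d ∈ PE G0 F0 i j := by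
    intro d
    rw [sup_pow_eq, isMinGen_mspan hdegH]
    rfl
  constructor
  · right
    have hex : ∀ j, ∃ L : List (Fin n →₀ ℕ), j ≤ s →
        L.Nodup ∧ (∀ d, d ∈ L ↔ d ∈ PE G0 F0 (s - j) j) ∧ LQ L := by
      intro j
      by_cases hj : j ≤ s
      · rcases hj.eq_or_lt with rfl | hlt
        · obtain ⟨L, hL⟩ := exists_star G0 F0 hF j
          refine ⟨L, fun _ => ?_⟩
          rwa [Nat.sub_self]
        · have := h1 (s - j) j (by omega) (by omega)
          rw [prod_eq] at this
          obtain ⟨L, hL⟩ := exists_order (hdeg j hj) this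
          exact ⟨L, fun _ => hL⟩
      · exact ⟨[], fun h => absurd h hj⟩
    choose O hO using hex
    obtain ⟨c1, c2, c3⟩ := core hG hF hGF s O hO
    exact ⟨_, c1, fun d => by rw [c2, hmin], (linQuot_iff K _).2 c3⟩
  · intro O hO hOs
    have hO' : ∀ j, j ≤ s → (O j).Nodup ∧ (∀ d, d ∈ O j ↔ d ∈ PE G0 F0 (s - j) j) ∧
        LQ (O j) := by
      intro j hj
      rcases hj.eq_or_lt with rfl | hlt
      · obtain ⟨a1, a2, a3⟩ := hOs
        refine ⟨a1, fun d => ?_, (linQuot_iff K _).1 a3⟩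
        have he : edgeIdeal K F0 ^ j = mspan K (PE G0 F0 (j - j) j) := by
          rw [← prod_eq, Nat.sub_self, pow_zero, one_mul]
        rw [a2, he, isMinGen_mspan (hdeg j hj)]
      · obtain ⟨a1, a2, a3⟩ := hO j (by omega)
        refine ⟨a1, fun d => ?_, (linQuot_iff K _).1 a3⟩
        rw [a2, prod_eq, isMinGen_mspan (hdeg j hj)]
    obtain ⟨c1, c2, c3⟩ := core hG hF hGF s O hO'
    exact ⟨c1, fun d => by rw [c2, hmin], (linQuot_iff K _).2 c3⟩

end
end

section
/- Let n ≥ 7 and let a, b ∈ [n] = {1,…,n} be such that |a − b| is congruent to 2 or −2 modulo n. Let A_n be the anticycle on n vertices, and let H be the graph obtained from A_n by removing the edges {a,b} and {(a+1 mod n), (b+1 mod n)} (where residues are taken in [n]) and adding the edge {(a+1 mod n), a}. Then the ideal I_H^s has linear quotients for s = 2 and for s = 3. -/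
open MvPolynomial

noncomputable section

/-- generators, in position coordinates -/
def GoodF (n s : ℕ) (f : ℕ → ℕ) : Prop :=
  (∀ i, n ≤ i → f i = 0) ∧ (∑ i ∈ Finset.range n, f i = 2 * s) ∧
  (∀ i, i + 3 < n → f i + f (i+1) ≤ s) ∧ f (n-1) + f 0 ≤ s ∧
  f (n-3) + f (n-2) + f (n-1) ≤ s

def TailF (n : ℕ) (f : ℕ → ℕ) : Prop := ∀ i, 3 ≤ i → i + 1 < n → f i = 0

def LexF (u v : ℕ → ℕ) : Prop := ∃ p, u p < v p ∧ ∀ j, j < p → u j = v j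

def BeforeF (n : ℕ) (u v : ℕ → ℕ) : Prop :=
  (¬ TailF n u ∧ TailF n v) ∨ (¬ TailF n u ∧ ¬ TailF n v ∧ LexF v u) ∨
  (TailF n u ∧ TailF n v ∧ LexF u v)

def moveF (v : ℕ → ℕ) (p q : ℕ) : ℕ → ℕ :=
  fun i => if i = p then v i + 1 else if i = q then v i - 1 else v i

lemma moveF_eq (v : ℕ → ℕ) (p q : ℕ) (hpq : p ≠ q) (hq : 0 < v q) (i : ℕ) :
    moveF v p q i + (if i = q then 1 else 0) = v i + (if i = p then 1 else 0) := by
  unfold moveF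
  split_ifs <;> first | omega | (subst_vars; omega)

lemma good_move (n s : ℕ) (v : ℕ → ℕ) (p q : ℕ) (hn : 7 ≤ n) (hv : GoodF n s v)
    (hp : p < n) (hqn : q < n) (hpq : p ≠ q) (hq : 0 < v q)
    (h1 : p + 3 < n → q ≠ p + 1 → v p + v (p+1) < s)
    (h2 : ∀ i, i + 1 = p → i + 3 < n → q ≠ i → v i + v p < s)
    (h3 : p = 0 → q ≠ n-1 → v (n-1) + v 0 < s)
    (h4 : p = n-1 → q ≠ 0 → v (n-1) + v 0 < s)
    (h5 : n - 3 ≤ p → q < n - 3 → v (n-3) + v (n-2) + v (n-1) < s) :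
    GoodF n s (moveF v p q) := by
  obtain ⟨a1, a2, a3, a4, a5⟩ := hv
  have e := moveF_eq v p q hpq hq
  refine ⟨?_, ?_, ?_, ?_, ?_⟩
  · intro i hi
    have := e i
    have := a1 i hi
    split_ifs at * <;> omega
  · have : ∑ i ∈ Finset.range n, (moveF v p q i + (if i = q then 1 else 0))
        = ∑ i ∈ Finset.range n, (v i + (if i = p then 1 else 0)) :=
      Finset.sum_congr rfl (fun i _ => e i)
    rw [Finset.sum_add_distrib, Finset.sum_add_distrib, Finset.sum_ite_eq', Finset.sum_ite_eq'] at this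
    simp only [Finset.mem_range, hp, hqn, if_true] at this
    omega
  · intro i hi
    have ei := e i
    have ei' := e (i+1)
    have := a3 i hi
    by_cases c1 : i = p
    · subst c1
      have := h1 hi
      split_ifs at * <;> omega
    · by_cases c2 : i + 1 = p
      · have := h2 i c2 hi
        subst c2
        split_ifs at * <;> omega
      · split_ifs at * <;> omega
  · have ei := e (n-1)
    have ei' := e 0
    by_cases c1 : p = 0
    · subst c1
      have := h3 rfl
      split_ifs at * <;> omega
    · by_cases c2 : p = n - 1
      · have := h4 c2
        split_ifs at * <;> omega
      · split_ifs at * <;> omega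
  · have e1 := e (n-1)
    have e2 := e (n-2)
    have e3 := e (n-3)
    by_cases c1 : n - 3 ≤ p
    · by_cases c2 : q < n - 3
      · have := h5 c1 c2
        split_ifs at * <;> omega
      · have : q = n-1 ∨ q = n-2 ∨ q = n-3 := by omega
        have : p = n-1 ∨ p = n-2 ∨ p = n-3 := by omega
        split_ifs at * <;> omega
    · split_ifs at * <;> omega

lemma sum_dec (n : ℕ) (hn : 7 ≤ n) (f : ℕ → ℕ) :
    ∑ i ∈ Finset.range n, f i = f 0 + f 1 + f 2 + (∑ i ∈ Finset.Ico 3 (n-1), f i) + f (n-1) := by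
  obtain ⟨m, rfl⟩ : ∃ m, n = m + 1 := ⟨n - 1, by omega⟩
  rw [Finset.sum_range_succ, Finset.range_eq_Ico,
    ← Finset.sum_Ico_consecutive f (show 0 ≤ 3 by omega) (show 3 ≤ m by omega)]
  simp [Finset.sum_range_succ]

lemma tail_iff (n : ℕ) (f : ℕ → ℕ) : TailF n f ↔ ∑ i ∈ Finset.Ico 3 (n-1), f i = 0 := by
  rw [Finset.sum_eq_zero_iff]
  constructor
  · intro h i hi
    rw [Finset.mem_Ico] at hi
    exact h i hi.1 (by omega)
  · intro h i h1 h2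
    exact h i (Finset.mem_Ico.2 ⟨h1, by omega⟩)

lemma ex_of_sum_lt (a b : ℕ) (u v : ℕ → ℕ)
    (h : ∑ i ∈ Finset.Ico a b, v i < ∑ i ∈ Finset.Ico a b, u i) :
    ∃ p, a ≤ p ∧ p < b ∧ v p < u p := by
  obtain ⟨p, hp, h⟩ := Finset.exists_lt_of_sum_lt h
  rw [Finset.mem_Ico] at hp
  exact ⟨p, hp.1, hp.2, h⟩

lemma le_P (a b : ℕ) (f : ℕ → ℕ) (i : ℕ) (h1 : a ≤ i) (h2 : i < b) :
    f i ≤ ∑ i ∈ Finset.Ico a b, f i :=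
  Finset.single_le_sum (f := f) (fun _ _ => Nat.zero_le _) (Finset.mem_Ico.2 ⟨h1, h2⟩)

lemma le_P2 (a b : ℕ) (f : ℕ → ℕ) (i j : ℕ) (h1 : a ≤ i) (h2 : i < b)
    (h1' : a ≤ j) (h2' : j < b) (hij : i ≠ j) :
    f i + f j ≤ ∑ i ∈ Finset.Ico a b, f i := by
  rw [← Finset.sum_pair hij]
  apply Finset.sum_le_sum_of_subset
  intro x hx
  simp only [Finset.mem_insert, Finset.mem_singleton] at hx
  rw [Finset.mem_Ico]
  omega

def Concl (n s : ℕ) (u v : ℕ → ℕ) : Prop :=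
  ∃ p q, p < n ∧ q < n ∧ p ≠ q ∧ 0 < v q ∧ v p < u p ∧ GoodF n s (moveF v p q) ∧
    BeforeF n (moveF v p q) v

lemma lex_move (v : ℕ → ℕ) (p q : ℕ) (h : p < q) : LexF v (moveF v p q) := by
  refine ⟨p, ?_, ?_⟩
  · simp [moveF]
  · intro j hj
    simp [moveF, show j ≠ p by omega, show j ≠ q by omega]

lemma lex_move' (v : ℕ → ℕ) (p q : ℕ) (h : q < p) (hq : 0 < v q) : LexF (moveF v p q) v := by
  refine ⟨q, ?_, ?_⟩
  · simp [moveF, show q ≠ p by omega]; omega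
  · intro j hj
    simp [moveF, show j ≠ p by omega, show j ≠ q by omega]

lemma not_tail_move1 (n : ℕ) (v : ℕ → ℕ) (p q : ℕ) (h1 : 3 ≤ p) (h2 : p + 1 < n) :
    ¬ TailF n (moveF v p q) := by
  intro h
  have := h p h1 h2
  simp [moveF] at this

lemma not_tail_move2 (n : ℕ) (v : ℕ → ℕ) (p q : ℕ) (hv : ¬ TailF n v)
    (h : q < 3 ∨ n ≤ q + 1) : ¬ TailF n (moveF v p q) := by
  intro h'
  apply hv
  intro i h1 h2
  have := h' i h1 h2
  unfold moveF at this
  split_ifs at this <;> omega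

lemma not_tail_move3 (n : ℕ) (v : ℕ → ℕ) (p q : ℕ) (hpq : p ≠ q) (hq : 0 < v q)
    (h : 2 ≤ ∑ i ∈ Finset.Ico 3 (n-1), v i) : ¬ TailF n (moveF v p q) := by
  intro h'
  rw [tail_iff] at h'
  have e := moveF_eq v p q hpq hq
  have : ∑ i ∈ Finset.Ico 3 (n-1), (moveF v p q i + (if i = q then 1 else 0))
        = ∑ i ∈ Finset.Ico 3 (n-1), (v i + (if i = p then 1 else 0)) :=
      Finset.sum_congr rfl (fun i _ => e i)
  rw [Finset.sum_add_distrib, Finset.sum_add_distrib, Finset.sum_ite_eq', Finset.sum_ite_eq'] at this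
  split_ifs at this <;> omega

/-- finishing lemma in the non-tail case -/
lemma fin1 (n s : ℕ) (u v : ℕ → ℕ) (p q : ℕ) (hn : 7 ≤ n) (hv : GoodF n s v)
    (hvt : ¬ TailF n v)
    (hp : p < q) (hqn : q < n) (hq : 0 < v q) (hu : v p < u p)
    (ht : 3 ≤ p ∨ q < 3 ∨ q = n - 1 ∨ 2 ≤ ∑ i ∈ Finset.Ico 3 (n-1), v i)
    (h1 : p + 3 < n → q ≠ p + 1 → v p + v (p+1) < s)
    (h2 : ∀ i, i + 1 = p → i + 3 < n → v i + v p < s)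
    (h3 : p = 0 → q ≠ n-1 → v (n-1) + v 0 < s)
    (h5 : n - 3 ≤ p → q < n - 3 → v (n-3) + v (n-2) + v (n-1) < s) : Concl n s u v := by
  have hg := good_move n s v p q hn hv (by omega) hqn (by omega) hq h1
    (fun i a b _ => h2 i a b) h3 (by omega) h5
  refine ⟨p, q, by omega, hqn, by omega, hq, hu, hg, Or.inr (Or.inl ⟨?_, hvt, lex_move v p q hp⟩)⟩
  rcases ht with h | h | h | h
  · exact not_tail_move1 n v p q h (by omega)
  · exact not_tail_move2 n v p q hvt (by omega)
  · exact not_tail_move2 n v p q hvt (by omega)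
  · exact not_tail_move3 n v p q (by omega) hq h

lemma core_nontail (n s : ℕ) (hn : 7 ≤ n) (hs : 2 ≤ s) (u v : ℕ → ℕ)
    (hu : GoodF n s u) (hv : GoodF n s v) (hut : ¬ TailF n u) (hvt : ¬ TailF n v)
    (p : ℕ) (hp : v p < u p) (hlt : ∀ j, j < p → v j = u j) : Concl n s u v := by
  have hv' := hv
  obtain ⟨u1, u2, u3, u4, u5⟩ := hu
  obtain ⟨v1, v2, v3, v4, v5⟩ := hv
  have F := fun q => fin1 n s u v p q hn hv' hvt
  have hPu := hut
  have hPv := hvt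
  rw [tail_iff] at hPu hPv
  have su := u2
  have sv := v2
  rw [sum_dec n hn] at su sv
  have hpn : p < n := by
    by_contra h
    have := u1 p (by omega)
    omega
  have u01 := u3 0 (by omega)
  have v01 := v3 0 (by omega)
  have u12 := u3 1 (by omega)
  have v12 := v3 1 (by omega)
  have u23 := u3 2 (by omega)
  have v23 := v3 2 (by omega)
  simp only [Nat.reduceAdd, Nat.zero_add] at u01 v01 u12 v12 u23 v23
  have hprev : ∀ i, i + 1 = p → i + 3 < n → v i + v p < s := by
    intro i hi h
    have := u3 i h
    have := hlt i (by omega)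
    subst hi
    omega
  have hexq : 0 < ∑ i ∈ Finset.Ico 3 (n-1), v i → ∃ q, 3 ≤ q ∧ q < n - 1 ∧ 0 < v q := by
    intro h
    obtain ⟨q, h1, h2, h3⟩ := ex_of_sum_lt 3 (n-1) v (fun _ => 0) (by simpa using h)
    exact ⟨q, h1, h2, h3⟩
  -- a later index where v is bigger
  have hlater : ∃ q, p < q ∧ q < n ∧ u q < v q := by
    by_contra hcon
    push Not at hcon
    have : ∑ i ∈ Finset.range n, v i < ∑ i ∈ Finset.range n, u i := by
      apply Finset.sum_lt_sum
      · intro i hi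
        rw [Finset.mem_range] at hi
        rcases lt_trichotomy i p with h | h | h
        · exact (hlt i h).le
        · subst h; exact hp.le
        · exact hcon i h hi
      · exact ⟨p, Finset.mem_range.2 hpn, hp⟩
    omega
  rcases Nat.lt_or_ge p 3 with hp3 | hp3
  · interval_cases p
    · -- p = 0
      simp only [Nat.zero_add] at F
      by_cases t1 : v 0 + v 1 = s
      · by_cases t2 : v (n-1) + v 0 = s
        · -- both tight
          have : ∃ p, 2 ≤ p ∧ p < n - 1 ∧ v p < u p := by
            by_cases h2 : v 2 < u 2
            · exact ⟨2, by omega, by omega, h2⟩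
            · obtain ⟨p, a, b, c⟩ := ex_of_sum_lt 3 (n-1) u v (by omega)
              exact ⟨p, by omega, b, c⟩
          obtain ⟨p, a, b, c⟩ := this
          apply fin1 n s u v p (n-1) hn hv' hvt (by omega) (by omega) (by omega) c (by omega)
          · intro h _
            by_cases p2 : p = 2
            · have := le_P 3 (n-1) v 3 (by omega) (by omega)
              subst p2
              simp only [Nat.reduceAdd]
              omega
            · have := le_P2 3 (n-1) v p (p+1) (by omega) (by omega) (by omega) (by omega) (by omega)
              omega
          · intro i hi h
            by_cases p2 : p = 2
            · have : i = 1 := by omega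
              subst p2 this
              omega
            · by_cases p3 : p = 3
              · have := le_P 3 (n-1) v 3 (by omega) (by omega)
                have : i = 2 := by omega
                subst p3 this
                omega
              · have := le_P2 3 (n-1) v i p (by omega) (by omega) (by omega) (by omega) (by omega)
                omega
          · omega
          · omega
        · exact F 1 (by omega) (by omega) (by omega) hp (by omega) (by omega) (by omega) (by omega) (by omega)
      · by_cases t2 : v (n-1) + v 0 = s
        · exact F (n-1) (by omega) (by omega) (by omega) hp (by omega) (by omega) (by omega) (by omega) (by omega)
        · by_cases z1 : 0 < v (n-1)
          · exact F (n-1) (by omega) (by omega) (by omega) hp (by omega) (by omega) (by omega) (by omega) (by omega)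
          · by_cases z2 : 0 < v 1
            · exact F 1 (by omega) (by omega) (by omega) hp (by omega) (by omega) (by omega) (by omega) (by omega)
            · by_cases z3 : 0 < v 2
              · exact F 2 (by omega) (by omega) (by omega) hp (by omega) (by omega) (by omega) (by omega) (by omega)
              · obtain ⟨q, a, b, c⟩ := hexq (by omega)
                exact F q (by omega) (by omega) (by omega) hp (by omega) (by omega) (by omega) (by omega) (by omega)
    · -- p = 1
      have l0 := hlt 0 (by omega)
      simp only [Nat.reduceAdd] at F
      by_cases t1 : v 1 + v 2 = s
      · exact F 2 (by omega) (by omega) (by omega) hp (by omega) (by omega) hprev (by omega) (by omega)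
      · by_cases z1 : 0 < v (n-1)
        · exact F (n-1) (by omega) (by omega) (by omega) hp (by omega) (by omega) hprev (by omega) (by omega)
        · by_cases z3 : 0 < v 2
          · exact F 2 (by omega) (by omega) (by omega) hp (by omega) (by omega) hprev (by omega) (by omega)
          · obtain ⟨q, a, b, c⟩ := hexq (by omega)
            exact F q (by omega) (by omega) (by omega) hp (by omega) (by omega) hprev (by omega) (by omega)
    · -- p = 2
      have l0 := hlt 0 (by omega)
      have l1 := hlt 1 (by omega)
      simp only [Nat.reduceAdd] at F
      by_cases t1 : v 2 + v 3 = s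
      · by_cases hP : 2 ≤ ∑ i ∈ Finset.Ico 3 (n-1), v i
        · exact F 3 (by omega) (by omega) (by omega) hp (by omega) (by omega) hprev (by omega) (by omega)
        · have b3 := le_P 3 (n-1) v 3 (by omega) (by omega)
          obtain ⟨p, a, b, c⟩ := 
            ex_of_sum_lt 3 (n-1) u (fun _ => 0) (by rw [Finset.sum_const_zero]; omega)
          replace c : 0 < u p := c
          have hp4 : p ≠ 3 := by
            rintro rfl
            omega
          have hvp := le_P2 3 (n-1) v p 3 (by omega) (by omega) (by omega) (by omega) (by omega)
          apply fin1 n s u v p (n-1) hn hv' hvt (by omega) (by omega) (by omega) (by omega) (by omega)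
          · intro h _
            have := le_P2 3 (n-1) v p (p+1) (by omega) (by omega) (by omega) (by omega) (by omega)
            omega
          · intro i hi h
            have := le_P2 3 (n-1) v i p (by omega) (by omega) (by omega) (by omega) (by omega)
            omega
          · omega
          · omega
      · by_cases z1 : 0 < v (n-1)
        · exact F (n-1) (by omega) (by omega) (by omega) hp (by omega) (by omega) hprev (by omega) (by omega)
        · by_cases hP : 2 ≤ ∑ i ∈ Finset.Ico 3 (n-1), v i
          · obtain ⟨q, a, b, c⟩ := hexq (by omega)
            exact F q (by omega) (by omega) (by omega) hp (by omega) (by omega) hprev (by omega) (by omega)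
          · omega
  · -- 3 ≤ p
    obtain ⟨q, hq1, hq2, hq3⟩ := hlater
    by_cases t : p + 3 < n ∧ v p + v (p+1) = s
    · have := u3 p t.1
      exact F (p+1) (by omega) (by omega) (by omega) hp (by omega) (by omega) hprev (by omega) (by omega)
    · refine F q (by omega) (by omega) (by omega) hp (by omega) ?_ hprev (by omega) (by omega)
      intro h _
      have := v3 p h
      omega

lemma core_s1 (n s : ℕ) (hn : 7 ≤ n) (hs : 2 ≤ s) (u v : ℕ → ℕ)
    (hu : GoodF n s u) (hv : GoodF n s v) (hb : BeforeF n u v) : Concl n s u v := by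
  rcases hb with ⟨hut, hvt⟩ | ⟨hut, hvt, p, h1, h2⟩ | ⟨hut, hvt, p, h1, h2⟩
  · have hv' := hv
    obtain ⟨v1, v2, v3, v4, v5⟩ := hv
    have hPv := hvt
    rw [tail_iff] at hPv
    rw [sum_dec n hn] at v2
    have v01 := v3 0 (by omega)
    have v12 := v3 1 (by omega)
    have v23 := v3 2 (by omega)
    simp only [Nat.reduceAdd, Nat.zero_add] at v01 v12 v23
    unfold TailF at hut
    push Not at hut
    obtain ⟨p, p1, p2, p3⟩ := hut
    have hvp := hvt p p1 p2
    have key : ∀ q, q < n → 0 < v q → (q < 3 ∨ q = n-1) → (p = 3 → 0 < v 2 → q = 2) →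
       (n - 3 ≤ p → 0 < v (n-1) → q = n-1) → Concl n s u v := by
      intro q q1 q2 q3 q4 q5
      refine ⟨p, q, by omega, q1, by omega, q2, by omega, ?_,
        Or.inl ⟨not_tail_move1 n v p q p1 p2, hvt⟩⟩
      apply good_move n s v p q hn hv' (by omega) q1 (by omega) q2
      · intro h _
        have := hvt (p+1) (by omega) (by omega)
        omega
      · intro i h1 h2 h3
        by_cases c : p = 3
        · have : i = 2 := by omega
          subst this
          have := q4 c
          omega
        · have := hvt i (by omega) (by omega)
          omega
      · omega
      · omega
      · intro h h'
        have := hvt (n-3) (by omega) (by omega)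
        have := hvt (n-2) (by omega) (by omega)
        have := q5 h
        omega
    by_cases c : p = 3 ∧ 0 < v 2
    · exact key 2 (by omega) c.2 (by omega) (by omega) (by omega)
    · by_cases c : 0 < v (n-1)
      · exact key (n-1) (by omega) c (by omega) (by omega) (by omega)
      · exact key 0 (by omega) (by omega) (by omega) (by omega) (by omega)
  · exact core_nontail n s hn hs u v hu hv hut hvt p h1 h2
  · have hv' := hv
    obtain ⟨v1, v2, v3, v4, v5⟩ := hv
    obtain ⟨u1, u2, u3, u4, u5⟩ := hu
    have hPv := hvt
    have hPu := hut
    rw [tail_iff] at hPv hPu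
    rw [sum_dec n hn] at v2 u2
    have v12 := v3 1 (by omega)
    have u12 := u3 1 (by omega)
    have u23 := u3 2 (by omega)
    simp only [Nat.reduceAdd, Nat.zero_add] at v12 u12 u23
    have tl : ∀ p q, p < n → q < p → 0 < v q → (p < 3 ∨ p = n - 1) → TailF n (moveF v p q) := by
      intro p q a b c d i i1 i2
      have := hvt i i1 i2
      unfold moveF
      split_ifs <;> omega
    have z3 := hvt (n-3) (by omega) (by omega)
    have z2 := hvt (n-2) (by omega) (by omega)
    have y3 := hut (n-3) (by omega) (by omega)
    have y2 := hut (n-2) (by omega) (by omega)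
    have w3 := hvt 3 (by omega) (by omega)
    by_cases p0 : p = 0
    · subst p0
      refine ⟨n-1, 0, by omega, by omega, by omega, by omega, by omega, ?_,
        Or.inr (Or.inr ⟨tl _ _ (by omega) (by omega) (by omega) (by omega), hvt,
          lex_move' _ _ _ (by omega) (by omega)⟩)⟩
      exact good_move n s v (n-1) 0 hn hv' (by omega) (by omega) (by omega) (by omega)
        (by omega) (by omega) (by omega) (by omega) (by omega)
    · have l0 := h2 0 (by omega)
      by_cases p0 : p = 1
      · subst p0
        refine ⟨2, 1, by omega, by omega, by omega, by omega, by omega, ?_,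
          Or.inr (Or.inr ⟨tl _ _ (by omega) (by omega) (by omega) (by omega), hvt,
            lex_move' _ _ _ (by omega) (by omega)⟩)⟩
        exact good_move n s v 2 1 hn hv' (by omega) (by omega) (by omega) (by omega)
          (by simp only [Nat.reduceAdd]; omega) (by omega) (by omega) (by omega) (by omega)
      · exfalso
        have l1 := h2 1 (by omega)
        by_cases p2 : p = 2
        · subst p2; omega
        · by_cases p3 : p + 1 < n
          · have := hut p (by omega) p3
            have := hvt p (by omega) p3
            omega
          · by_cases p4 : p = n - 1
            · subst p4; omega
            · have := v1 p (by omega)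
              omega
def AdjF (n i j : ℕ) : Prop :=
  i ≠ j ∧ i + 1 ≠ j ∧ j + 1 ≠ i ∧ ¬ (i = 0 ∧ j = n-1) ∧ ¬ (j = 0 ∧ i = n-1) ∧
  ¬ (i = n-3 ∧ j = n-1) ∧ ¬ (j = n-3 ∧ i = n-1)

lemma exists_sorted (n : ℕ) (N : ℕ) (f : ℕ → ℕ) (h0 : ∀ i, n ≤ i → f i = 0)
    (h : ∑ i ∈ Finset.range n, f i = N) :
    ∃ y : ℕ → ℕ, (∀ i j, i ≤ j → j < N → y i ≤ y j) ∧ (∀ k, k < N → y k < n) ∧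
      ∀ i, f i = ((Finset.range N).filter (fun k => y k = i)).card := by
  classical
  set M : Multiset ℕ := ∑ i ∈ Finset.range n, Multiset.replicate (f i) i with hM
  have hcount : ∀ i, M.count i = f i := by
    intro i
    rw [hM, Multiset.count_sum']
    simp only [Multiset.count_replicate]
    rw [Finset.sum_ite_eq']
    split_ifs with hi
    · rfl
    · exact (h0 i (by simpa using hi)).symm
  have hcard : M.card = N := by
    rw [hM, Multiset.card_sum]
    simpa using h
  set l := M.sort (· ≤ ·) with hl
  have hlen : l.length = N := by rw [hl, Multiset.length_sort, hcard]
  have hsort : l.Pairwise (· ≤ ·) := Multiset.pairwise_sort M _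
  have hmem : ∀ x ∈ l, x < n := by
    intro x hx
    rw [hl, Multiset.mem_sort, ← Multiset.count_pos, hcount] at hx
    by_contra hc
    have := h0 x (by omega)
    omega
  refine ⟨fun k => l.getD k 0, ?_, ?_, ?_⟩
  · intro i j hij hj
    simp only
    rw [List.getD_eq_getElem _ _ (by omega), List.getD_eq_getElem _ _ (by omega)]
    rcases hij.eq_or_lt with h | h
    · subst h; rfl
    · exact List.pairwise_iff_getElem.1 hsort i j (by omega) (by omega) h
  · intro k hk
    simp only
    rw [List.getD_eq_getElem _ _ (by omega)]
    exact hmem _ (List.getElem_mem _)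
  · intro i
    rw [← hcount i]
    have : M = (l : Multiset ℕ) := by rw [hl, Multiset.sort_eq]
    rw [this, ← hlen]
    clear_value l
    have e : (l : Multiset ℕ) = (Multiset.range l.length).map (fun k => l.getD k 0) := by
      rw [← Multiset.coe_range, Multiset.map_coe]
      congr 1
      apply List.ext_getElem
      · simp
      · intro k h1 h2
        simp [List.getElem?_eq_getElem h1]
    conv_lhs => rw [e]
    rw [Multiset.count_map]
    rw [Finset.card_def, Finset.filter_val, Finset.range_val]
    congr 1
    apply Multiset.filter_congr
    intro x _
    exact eq_comm

lemma exists_matching (n s : ℕ) (hn : 7 ≤ n) (f : ℕ → ℕ) (hf : GoodF n s f) :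
    ∃ y z : ℕ → ℕ, (∀ k, k < s → y k < n ∧ z k < n ∧ AdjF n (y k) (z k)) ∧
      ∀ i, f i = ∑ k ∈ Finset.range s, ((if y k = i then 1 else 0) + (if z k = i then 1 else 0)) := by
  obtain ⟨f0, f1, f2, f3, f4⟩ := hf
  obtain ⟨y, ym, yn, yc⟩ := exists_sorted n (2*s) f f0 f1
  refine ⟨y, fun k => y (k+s), ?_, ?_⟩
  · intro k hk
    have a1 := yn k (by omega)
    have a2 := yn (k+s) (by omega)
    have hm := ym k (k+s) (by omega) (by omega)
    refine ⟨a1, a2, ?_⟩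
    -- counting
    have cnt2 : ∀ a b, a ≠ b → ∀ A : Finset ℕ, s + 1 ≤ A.card →
        (∀ j ∈ A, j < 2 * s ∧ (y j = a ∨ y j = b)) → s + 1 ≤ f a + f b := by
      intro a b hab A hA hA'
      refine hA.trans ?_
      rw [yc a, yc b]
      refine (Finset.card_le_card ?_).trans (Finset.card_union_le _ _)
      intro j hj
      have := hA' j hj
      simp only [Finset.mem_union, Finset.mem_filter, Finset.mem_range]
      tauto
    have cnt3 : ∀ a b c, ∀ A : Finset ℕ, s + 1 ≤ A.card →
        (∀ j ∈ A, j < 2 * s ∧ (y j = a ∨ y j = b ∨ y j = c)) → s + 1 ≤ f a + f b + f c := by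
      intro a b c A hA hA'
      refine hA.trans ?_
      rw [yc a, yc b, yc c]
      refine (Finset.card_le_card ?_).trans ((Finset.card_union_le _ _).trans
        (Nat.add_le_add_right (Finset.card_union_le _ _) _))
      intro j hj
      have := hA' j hj
      simp only [Finset.mem_union, Finset.mem_filter, Finset.mem_range]
      tauto
    have hI : s + 1 ≤ (Finset.Icc k (k+s)).card := by simp; omega
    have hIm : ∀ j ∈ Finset.Icc k (k+s), j < 2 * s ∧ y k ≤ y j ∧ y j ≤ y (k+s) := by
      intro j hj
      rw [Finset.mem_Icc] at hj
      exact ⟨by omega, ym _ _ hj.1 (by omega), ym _ _ hj.2 (by omega)⟩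
    -- triple
    have triple : n - 3 ≤ y k → False := by
      intro h
      have := cnt3 (n-3) (n-2) (n-1) _ hI (by
        intro j hj
        have h3 := hIm j hj
        have := yn j h3.1
        exact ⟨h3.1, by omega⟩)
      omega
    have pair : y (k+s) ≤ y k + 1 → False := by
      intro h
      by_cases h3 : n - 3 ≤ y k
      · exact triple h3
      · have := cnt2 (y k) (y k + 1) (by omega) _ hI (by
          intro j hj
          have h3 := hIm j hj
          exact ⟨h3.1, by omega⟩)
        have := f2 (y k) (by omega)
        omega
    have wrap : y k = 0 → y (k+s) = n-1 → False := by
      intro h h'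
      have := cnt2 (n-1) 0 (by omega) (Finset.Icc 0 k ∪ Finset.Ico (k+s) (2*s)) (by
        rw [Finset.card_union_of_disjoint]
        · simp; omega
        · rw [Finset.disjoint_left]
          intro x hx hx'
          rw [Finset.mem_Icc] at hx
          rw [Finset.mem_Ico] at hx'
          omega) (by
        intro j hj
        rw [Finset.mem_union, Finset.mem_Icc, Finset.mem_Ico] at hj
        rcases hj with hj | hj
        · have := ym j k hj.2 (by omega)
          exact ⟨by omega, by omega⟩
        · have := ym (k+s) j hj.1 (by omega)
          have := yn j (by omega)
          exact ⟨by omega, by omega⟩)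
      omega
    refine ⟨?_, ?_, ?_, ?_, ?_, ?_, ?_⟩ <;> simp only [] <;> intro h
    · exact pair (by omega)
    · exact pair (by omega)
    · exact pair (by omega)
    · exact wrap h.1 h.2
    · exact pair (by omega)
    · exact triple (by omega)
    · exact pair (by omega)
  · intro i
    rw [yc i, Finset.card_filter, two_mul, Finset.sum_range_add, Finset.sum_add_distrib]
    congr 1
    apply Finset.sum_congr rfl
    intro k _
    rw [add_comm]

/-- minimal generators of an equigenerated monomial ideal -/
lemma isMinGen_iff {K : Type*} [Field K] {n : ℕ} (I : Ideal (MvPolynomial (Fin n) K))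
    (S : Set (Fin n →₀ ℕ)) (N : ℕ) (hS : ∀ d ∈ S, d.degree = N)
    (hI : I = Ideal.span ((fun d => monomial d (1 : K)) '' S)) (d : Fin n →₀ ℕ) :
    IsMinGen I d ↔ d ∈ S := by
  have hmem : ∀ e : Fin n →₀ ℕ, monomial e (1 : K) ∈ I ↔ ∃ t ∈ S, t ≤ e := by
    intro e
    rw [hI, mem_ideal_span_monomial_image]
    simp [support_monomial]
  unfold IsMinGen
  simp only [hmem]
  constructor
  · rintro ⟨⟨t, ht, htd⟩, h⟩
    by_contra hd
    exact h t htd (fun h => hd (h ▸ ht)) ⟨t, ht, le_rfl⟩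
  · intro hd
    refine ⟨⟨d, hd, le_rfl⟩, ?_⟩
    rintro e he hne ⟨t, ht, hte⟩
    apply hne
    have h1 : t ≤ d := hte.trans he
    have h2 : t = d := by
      obtain ⟨c, rfl⟩ := exists_add_of_le h1
      have a := hS _ ht
      have b := hS _ hd
      rw [map_add] at b
      have : c.degree = 0 := by omega
      rw [Finsupp.degree_eq_zero_iff] at this
      simp [this]
    exact le_antisymm he (h2 ▸ hte)

lemma linQuot_of_list (K : Type*) [Field K] {n : ℕ} (L : List (Fin n →₀ ℕ))
    (h : ∀ i : Fin L.length, ∀ k : Fin L.length, k < i →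
      ∃ k' : Fin L.length, k' < i ∧ ∃ p q : Fin n,
        L.get k' + Finsupp.single q 1 = L.get i + Finsupp.single p 1 ∧ L.get i p < L.get k p) :
    IsLinQuotOrder K L := by
  intro i _
  refine ⟨{p | ∃ k' : Fin L.length, k' < i ∧ ∃ q : Fin n,
        L.get k' + Finsupp.single q 1 = L.get i + Finsupp.single p 1}, ?_⟩
  have hset : {m : MvPolynomial (Fin n) K |
          ∃ k : Fin L.length, k.val < i.val ∧ m = monomial (L.get k) 1} =
      (fun d => monomial d (1 : K)) '' {d | ∃ k : Fin L.length, k < i ∧ d = L.get k} := by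
    ext m
    constructor
    · rintro ⟨k, hk, rfl⟩
      exact ⟨_, ⟨k, hk, rfl⟩, rfl⟩
    · rintro ⟨_, ⟨k, hk, rfl⟩, rfl⟩
      exact ⟨k, hk, rfl⟩
  rw [hset]
  apply le_antisymm
  · intro f hf
    rw [Submodule.mem_colon] at hf
    have h1 := hf _ (Ideal.subset_span (Set.mem_singleton (monomial (L.get i) (1:K))))
    rw [smul_eq_mul, mem_ideal_span_monomial_image] at h1
    rw [mem_ideal_span_X_image]
    intro m hm
    obtain ⟨_, ⟨k, hk, rfl⟩, hle⟩ := h1 (m + L.get i) (by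
      rw [mem_support_iff, coeff_mul_monomial, mul_one]
      exact mem_support_iff.1 hm)
    obtain ⟨k', hk', p, q, e, hp⟩ := h i k hk
    refine ⟨p, ⟨k', hk', q, e⟩, ?_⟩
    have := hle p
    rw [Finsupp.add_apply] at this
    omega
  · rw [Ideal.span_le]
    rintro _ ⟨p, ⟨k', hk', q, e⟩, rfl⟩
    simp only [SetLike.mem_coe]
    rw [Submodule.mem_colon]
    intro g hg
    obtain ⟨c, rfl⟩ := Ideal.mem_span_singleton'.1 hg
    rw [smul_eq_mul]
    have : X p * (c * monomial (L.get i) (1:K)) = (c * X q) * monomial (L.get k') 1 := by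
      have e1 : (X p : MvPolynomial (Fin n) K) * monomial (L.get i) 1
          = X q * monomial (L.get k') 1 := by
        simp only [X, monomial_mul, one_mul]
        rw [add_comm, ← e, add_comm]
      calc _ = c * (X p * monomial (L.get i) 1) := by ring
        _ = _ := by rw [e1]; ring
    rw [this]
    exact Ideal.mul_mem_left _ _ (Ideal.subset_span ⟨_, ⟨k', hk', rfl⟩, rfl⟩)


def FF {n : ℕ} (τ : Fin n ≃ Fin n) (d : Fin n →₀ ℕ) : ℕ → ℕ :=
  fun i => if h : i < n then d (τ.symm ⟨i, h⟩) else 0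

lemma FF_of_lt {n : ℕ} (τ : Fin n ≃ Fin n) (d : Fin n →₀ ℕ) (x : Fin n) :
    FF τ d (τ x) = d x := by
  simp [FF]

lemma FF_ge {n : ℕ} (τ : Fin n ≃ Fin n) (d : Fin n →₀ ℕ) (i : ℕ) (h : n ≤ i) :
    FF τ d i = 0 := by
  simp [FF, Nat.not_lt.2 h]

lemma FF_add {n : ℕ} (τ : Fin n ≃ Fin n) (d e : Fin n →₀ ℕ) (i : ℕ) :
    FF τ (d + e) i = FF τ d i + FF τ e i := by
  unfold FF
  split_ifs <;> simp

lemma FF_single {n : ℕ} (τ : Fin n ≃ Fin n) (x : Fin n) (i : ℕ) :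
    FF τ (Finsupp.single x 1) i = if i = (τ x : ℕ) then 1 else 0 := by
  unfold FF
  by_cases h : i < n
  · simp only [h, dif_pos, Finsupp.single_apply]
    congr 1
    rw [Equiv.eq_symm_apply, Fin.ext_iff]
    simp [eq_comm]
  · simp only [h, dif_neg, not_false_eq_true]
    rw [if_neg]
    have := (τ x).2
    omega

lemma FF_sum {n : ℕ} (τ : Fin n ≃ Fin n) (d : Fin n →₀ ℕ) :
    ∑ i ∈ Finset.range n, FF τ d i = d.degree := by
  rw [Finset.sum_range, Finsupp.degree_eq_sum, ← Equiv.sum_comp τ]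
  exact Finset.sum_congr rfl (fun x _ => FF_of_lt τ d x)

lemma FF_inj {n : ℕ} (τ : Fin n ≃ Fin n) (d e : Fin n →₀ ℕ)
    (h : ∀ i, FF τ d i = FF τ e i) : d = e := by
  ext x
  rw [← FF_of_lt τ d, ← FF_of_lt τ e, h]

def EE {n : ℕ} (τ : Fin n ≃ Fin n) (g : Lex (Fin n → ℕ)) : Fin n →₀ ℕ :=
  Finsupp.equivFunOnFinite.symm (fun x => ofLex g (τ x))

lemma FF_EE {n : ℕ} (τ : Fin n ≃ Fin n) (g : Lex (Fin n → ℕ)) (i : Fin n) :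
    FF τ (EE τ g) i = ofLex g i := by
  obtain ⟨x, rfl⟩ := τ.surjective i
  rw [FF_of_lt]
  rfl

lemma EE_surj {n : ℕ} (τ : Fin n ≃ Fin n) (d : Fin n →₀ ℕ) : ∃ g, EE τ g = d := by
  refine ⟨toLex (fun i => d (τ.symm i)), ?_⟩
  ext x
  simp [EE]

lemma EE_inj {n : ℕ} (τ : Fin n ≃ Fin n) : Function.Injective (EE τ) := by
  intro g h e
  apply ofLex.injective
  funext i
  rw [← FF_EE τ g, ← FF_EE τ h, e]

lemma EE_lt {n : ℕ} (τ : Fin n ≃ Fin n) (g h : Lex (Fin n → ℕ)) (hgh : g < h) :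
    LexF (FF τ (EE τ g)) (FF τ (EE τ h)) := by
  obtain ⟨i, h1, h2⟩ := hgh
  refine ⟨i, ?_, ?_⟩
  · rw [FF_EE, FF_EE]; exact h2
  · intro j hj
    have := h1 ⟨j, by omega⟩ hj
    exact (FF_EE τ g ⟨j, by omega⟩).trans (this.trans (FF_EE τ h ⟨j, by omega⟩).symm)

lemma good_zero (n : ℕ) : GoodF n 0 (fun _ => 0) := by
  refine ⟨?_, ?_, ?_, ?_, ?_⟩ <;> simp

lemma good_edge (n s : ℕ) (hn : 7 ≤ n) (f g : ℕ → ℕ) (a b : ℕ) (ha : a < n) (hb : b < n)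
    (hab : AdjF n a b) (hf : GoodF n s f)
    (hg : ∀ i, g i = f i + (if i = a then 1 else 0) + (if i = b then 1 else 0)) :
    GoodF n (s+1) g := by
  obtain ⟨f0, f1, f2, f3, f4⟩ := hf
  obtain ⟨h1, h2, h3, h4, h5, h6, h7⟩ := hab
  refine ⟨?_, ?_, ?_, ?_, ?_⟩
  · intro i hi
    rw [hg, f0 i hi, if_neg (by omega), if_neg (by omega)]
  · rw [Finset.sum_congr rfl (fun i _ => hg i), Finset.sum_add_distrib, Finset.sum_add_distrib,
      Finset.sum_ite_eq', Finset.sum_ite_eq', if_pos (by simpa using ha),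
      if_pos (by simpa using hb), f1]
    ring
  · intro i hi
    have := f2 i hi
    rw [hg, hg]
    split_ifs <;> omega
  · rw [hg, hg]
    split_ifs <;> omega
  · rw [hg, hg, hg]
    split_ifs <;> omega

lemma pow_eq_span (K : Type*) [Field K] {n : ℕ} (hn : 7 ≤ n) (G : SimpleGraph (Fin n))
    (τ : Fin n ≃ Fin n) (hG : ∀ x y, G.Adj x y ↔ AdjF n (τ x) (τ y)) (s : ℕ) :
    edgeIdeal K G ^ s =
      Ideal.span ((fun d => monomial d (1 : K)) '' {d | GoodF n s (FF τ d)}) := by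
  apply le_antisymm
  · induction s with
    | zero =>
      have : (1 : MvPolynomial (Fin n) K) ∈
          Ideal.span ((fun d => monomial d (1 : K)) '' {d | GoodF n 0 (FF τ d)}) := by
        apply Ideal.subset_span
        refine ⟨0, ?_, rfl⟩
        have : FF τ 0 = fun _ => 0 := by
          funext i; simp [FF]
        simp only [Set.mem_setOf_eq, this]
        exact good_zero n
      rw [(Ideal.eq_top_iff_one _).2 this]
      exact le_top
    | succ s ih =>
      rw [pow_succ]
      refine (Ideal.mul_mono_left ih).trans ?_
      unfold edgeIdeal
      rw [Ideal.span_mul_span', Ideal.span_le]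
      rintro _ ⟨_, ⟨d, hd, rfl⟩, _, ⟨x, y, hxy, rfl⟩, rfl⟩
      apply Ideal.subset_span
      refine ⟨d + Finsupp.single x 1 + Finsupp.single y 1, ?_, ?_⟩
      · refine good_edge n s hn _ _ _ _ (τ x).2 (τ y).2 ((hG x y).1 hxy) hd ?_
        intro i
        rw [FF_add, FF_add, FF_single, FF_single]
      · simp only [X, monomial_mul, mul_one, add_assoc]
  · rw [Ideal.span_le]
    rintro _ ⟨d, hd, rfl⟩
    obtain ⟨y, z, h1, h2⟩ := exists_matching n s hn _ hd
    have hx : ∀ k, ∃ Y Z : Fin n, k < s → (τ Y : ℕ) = y k ∧ (τ Z : ℕ) = z k := by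
      intro k
      by_cases hk : k < s
      · obtain ⟨a, b, _⟩ := h1 k hk
        exact ⟨τ.symm ⟨y k, a⟩, τ.symm ⟨z k, b⟩, fun _ => by simp⟩
      · exact ⟨⟨0, by omega⟩, ⟨0, by omega⟩, fun h => absurd h hk⟩
    choose Y Z hYZ using hx
    have hd' : d = ∑ k ∈ Finset.range s, (Finsupp.single (Y k) 1 + Finsupp.single (Z k) 1) := by
      ext x
      rw [← FF_of_lt τ d x, h2, Finsupp.finset_sum_apply]
      apply Finset.sum_congr rfl
      intro k hk
      obtain ⟨e1, e2⟩ := hYZ k (Finset.mem_range.1 hk)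
      rw [← e1, ← e2, Finsupp.add_apply, Finsupp.single_apply, Finsupp.single_apply]
      simp only [Fin.val_inj, τ.injective.eq_iff]
    have : monomial d (1:K) = ∏ k ∈ Finset.range s, (X (Y k) * X (Z k)) := by
      rw [hd', monomial_sum_one]
      apply Finset.prod_congr rfl
      intro k _
      simp only [X, monomial_mul, mul_one]
    simp only [SetLike.mem_coe]
    rw [this]
    have h3 := Ideal.prod_mem_prod (s := Finset.range s) (I := fun _ => edgeIdeal K G)
      (x := fun k => (X (Y k) * X (Z k) : MvPolynomial (Fin n) K)) (by
        intro k hk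
        have hk := Finset.mem_range.1 hk
        obtain ⟨e1, e2⟩ := hYZ k hk
        refine Ideal.subset_span ⟨Y k, Z k, (hG _ _).2 ?_, rfl⟩
        rw [e1, e2]
        exact (h1 k hk).2.2)
    simpa using h3

lemma lexF_irrefl (u : ℕ → ℕ) : ¬ LexF u u := by
  rintro ⟨p, h, _⟩
  omega

lemma lexF_asymm (u v : ℕ → ℕ) (h : LexF u v) : ¬ LexF v u := by
  obtain ⟨p, h1, h2⟩ := h
  rintro ⟨q, h3, h4⟩
  rcases lt_trichotomy p q with h | h | h
  · have := h4 p h; omega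
  · subst h; omega
  · have := h2 q h; omega

lemma before_irrefl (n : ℕ) (u : ℕ → ℕ) : ¬ BeforeF n u u := by
  have := lexF_irrefl u
  unfold BeforeF
  tauto

lemma before_asymm (n : ℕ) (u v : ℕ → ℕ) (h : BeforeF n u v) : ¬ BeforeF n v u := by
  have := lexF_asymm u v
  unfold BeforeF at *
  tauto

lemma exists_list {n : ℕ} (τ : Fin n ≃ Fin n) (s : ℕ) :
    ∃ L : List (Fin n →₀ ℕ), L.Pairwise (fun d e => BeforeF n (FF τ d) (FF τ e)) ∧
      ∀ d, d ∈ L ↔ GoodF n s (FF τ d) := by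
  classical
  have hfin : {d : Fin n →₀ ℕ | GoodF n s (FF τ d)}.Finite := by
    apply ((Finset.univ : Finset (Fin n)).finsuppAntidiag (2*s)).finite_toSet.subset
    intro d hd
    simp only [Finset.mem_coe, Finset.mem_finsuppAntidiag]
    refine ⟨?_, Finset.subset_univ _⟩
    have := hd.2.1
    rw [FF_sum, Finsupp.degree_eq_sum] at this
    exact this
  have hfin' : {g : Lex (Fin n → ℕ) | GoodF n s (FF τ (EE τ g))}.Finite :=
    hfin.preimage (EE_inj τ).injOn
  set A := hfin'.toFinset.filter (fun g => ¬ TailF n (FF τ (EE τ g))) with hA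
  set B := hfin'.toFinset.filter (fun g => TailF n (FF τ (EE τ g))) with hB
  refine ⟨(A.sort (· ≤ ·)).reverse.map (EE τ) ++ (B.sort (· ≤ ·)).map (EE τ), ?_, ?_⟩
  · rw [List.pairwise_append]
    refine ⟨?_, ?_, ?_⟩
    · rw [List.pairwise_map, List.pairwise_reverse]
      refine (List.Pairwise.and_mem.1 (Finset.sortedLT_sort A).pairwise).imp ?_
      rintro a b ⟨ha, hb, hab⟩
      rw [Finset.mem_sort, hA, Finset.mem_filter] at ha hb
      exact Or.inr (Or.inl ⟨hb.2, ha.2, EE_lt τ _ _ hab⟩)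
    · rw [List.pairwise_map]
      refine (List.Pairwise.and_mem.1 (Finset.sortedLT_sort B).pairwise).imp ?_
      rintro a b ⟨ha, hb, hab⟩
      rw [Finset.mem_sort, hB, Finset.mem_filter] at ha hb
      exact Or.inr (Or.inr ⟨ha.2, hb.2, EE_lt τ _ _ hab⟩)
    · intro a ha b hb
      simp only [List.mem_map, List.mem_reverse, Finset.mem_sort, hA, hB, Finset.mem_filter] at ha hb
      obtain ⟨a, ha, rfl⟩ := ha
      obtain ⟨b, hb, rfl⟩ := hb
      exact Or.inl ⟨ha.2, hb.2⟩
  · intro d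
    obtain ⟨g, rfl⟩ := EE_surj τ d
    rw [List.mem_append, List.mem_map_of_injective (EE_inj τ), List.mem_map_of_injective (EE_inj τ),
      List.mem_reverse, Finset.mem_sort, Finset.mem_sort, hA, hB, Finset.mem_filter,
      Finset.mem_filter, Set.Finite.mem_toFinset]
    simp only [Set.mem_setOf_eq]
    tauto

lemma main_tau (K : Type*) [Field K] {n : ℕ} (hn : 7 ≤ n) (G : SimpleGraph (Fin n))
    (τ : Fin n ≃ Fin n) (hG : ∀ x y, G.Adj x y ↔ AdjF n (τ x) (τ y)) (s : ℕ) (hs : 2 ≤ s) :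
    HasLinearQuotients (edgeIdeal K G ^ s) := by
  obtain ⟨L, hL, hmem⟩ := exists_list τ s
  refine Or.inr ⟨L, ?_, ?_, ?_⟩
  · refine hL.imp ?_
    rintro a b h rfl
    exact before_irrefl n _ h
  · intro d
    rw [hmem, isMinGen_iff (edgeIdeal K G ^ s) {d | GoodF n s (FF τ d)} (2*s) _
      (pow_eq_span K hn G τ hG s)]
    · rfl
    · intro d hd
      rw [← FF_sum τ]
      exact hd.2.1
  · apply linQuot_of_list
    intro i k hki
    rw [List.pairwise_iff_get] at hL
    obtain ⟨p, q, hp, hq, hpq, hvq, hvp, hg, hb⟩ := core_s1 n s hn hs _ _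
      ((hmem _).1 (L.get_mem k)) ((hmem _).1 (L.get_mem i)) (hL k i hki)
    obtain ⟨x, rfl⟩ : ∃ x, (τ x : ℕ) = p := ⟨τ.symm ⟨p, hp⟩, by simp⟩
    obtain ⟨y, rfl⟩ : ∃ x, (τ x : ℕ) = q := ⟨τ.symm ⟨q, hq⟩, by simp⟩
    have hw : ∃ w : Fin n →₀ ℕ, FF τ w = moveF (FF τ (L.get i)) (τ x) (τ y) := by
      refine ⟨EE τ (toLex (fun j => moveF (FF τ (L.get i)) (τ x) (τ y) j)), ?_⟩
      funext j
      by_cases hj : j < n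
      · exact FF_EE τ _ ⟨j, hj⟩
      · rw [FF_ge _ _ _ (by omega), hg.1 j (by omega)]
    obtain ⟨w, hw⟩ := hw
    rw [← hw] at hg hb
    obtain ⟨k', hk'⟩ := List.get_of_mem ((hmem w).2 hg)
    refine ⟨k', ?_, x, y, ?_, ?_⟩
    · rcases lt_trichotomy k' i with h | h | h
      · exact h
      · subst h
        rw [hk'] at hb
        exact absurd hb (before_irrefl n _)
      · have := hL i k' h
        rw [hk'] at this
        exact absurd hb (before_asymm n _ _ this)
    · rw [hk']
      apply FF_inj τ
      intro j
      rw [FF_add, FF_add, FF_single, FF_single, hw]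
      exact moveF_eq _ _ _ hpq hvq j
    · rw [FF_of_lt, FF_of_lt] at hvp
      exact hvp

lemma main_pos (K : Type*) [Field K] {n : ℕ} (hn : 7 ≤ n) (G : SimpleGraph (Fin n))
    (t : ℕ → ℕ) (ht : ∀ x, x < n → t x < n) (hinj : ∀ x y, x < n → y < n → t x = t y → x = y)
    (hG : ∀ x y : Fin n, G.Adj x y ↔ AdjF n (t x) (t y)) (s : ℕ) (hs : 2 ≤ s) :
    HasLinearQuotients (edgeIdeal K G ^ s) := by
  have hb : Function.Bijective (fun x : Fin n => (⟨t x, ht x x.2⟩ : Fin n)) := by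
    apply Finite.injective_iff_bijective.1
    intro x y h
    simp only [Fin.mk.injEq] at h
    exact Fin.ext (hinj x y x.2 y.2 h)
  exact main_tau K hn G (Equiv.ofBijective _ hb) hG s hs

lemma succ_mod_spec (n i : ℕ) (hi : i < n) :
    (i + 1 = n ∧ (i + 1) % n = 0) ∨ (i + 1 < n ∧ (i + 1) % n = i + 1) := by
  by_cases h : i + 1 = n
  · left; exact ⟨h, by rw [h, Nat.mod_self]⟩
  · right; exact ⟨by omega, Nat.mod_eq_of_lt (by omega)⟩

/-- swap the last two positions -/
def swp (n j : ℕ) : ℕ := if j + 1 = n then n - 2 else if j + 2 = n then n - 1 else j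

/-- positions when `b = a + 2` cyclically (`A = a - 1`) -/
def posP (n A x : ℕ) : ℕ := swp n (if x ≤ A then A - x else A + n - x)

/-- positions when `b = a - 2` cyclically (`C` is the successor of `a - 1`) -/
def posM (n C x : ℕ) : ℕ := swp n (if C ≤ x then x - C else x + n - C)

lemma swp_lt (n j : ℕ) (hn : 7 ≤ n) (hj : j < n) : swp n j < n := by
  unfold swp; split_ifs <;> omega

lemma swp_inj (n j k : ℕ) (hn : 7 ≤ n) (hj : j < n) (hk : k < n) (h : swp n j = swp n k) :
    j = k := by
  unfold swp at h; split_ifs at h <;> omega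

set_option maxHeartbeats 4000000 in
lemma adj_swp (n j k : ℕ) (hn : 7 ≤ n) (hj : j < n) (hk : k < n) :
    AdjF n (swp n j) (swp n k) ↔
    (((¬ j = k ∧ ¬ (j = k + 1 ∨ (j = 0 ∧ k + 1 = n)) ∧ ¬ (k = j + 1 ∨ (k = 0 ∧ j + 1 = n))) ∧
      ¬ ((j = 0 ∧ k + 2 = n ∨ j + 2 = n ∧ k = 0) ∨
        (j + 1 = n ∧ k + 3 = n ∨ j + 3 = n ∧ k + 1 = n))) ∨
      (j + 1 = n ∧ k = 0 ∨ j = 0 ∧ k + 1 = n) ∧ ¬ j = k) := by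
  unfold AdjF
  by_cases j1 : j + 1 = n
  · have : swp n j = n - 2 := by simp [swp, j1]
    rw [this]
    by_cases k1 : k + 1 = n
    · have : swp n k = n - 2 := by simp [swp, k1]
      rw [this]; omega
    · by_cases k2 : k + 2 = n
      · have : swp n k = n - 1 := by simp [swp, k1, k2]
        rw [this]; omega
      · have : swp n k = k := by simp [swp, k1, k2]
        rw [this]; omega
  · by_cases j2 : j + 2 = n
    · have : swp n j = n - 1 := by simp [swp, j1, j2]
      rw [this]
      by_cases k1 : k + 1 = n
      · have : swp n k = n - 2 := by simp [swp, k1]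
        rw [this]; omega
      · by_cases k2 : k + 2 = n
        · have : swp n k = n - 1 := by simp [swp, k1, k2]
          rw [this]; omega
        · have : swp n k = k := by simp [swp, k1, k2]
          rw [this]; omega
    · have : swp n j = j := by simp [swp, j1, j2]
      rw [this]
      by_cases k1 : k + 1 = n
      · have : swp n k = n - 2 := by simp [swp, k1]
        rw [this]; omega
      · by_cases k2 : k + 2 = n
        · have : swp n k = n - 1 := by simp [swp, k1, k2]
          rw [this]; omega
        · have : swp n k = k := by simp [swp, k1, k2]
          rw [this]
          have a1 : ¬ k = n - 1 := by omega
          have a2 : ¬ j = n - 1 := by omega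
          simp only [j1, j2, k1, k2, a1, a2, and_false, false_and, or_false, not_false_eq_true,
            and_true, ne_eq]
          omega

lemma succ_rel (n A x y x' j k : ℕ) (hx : x < n) (hy : y < n) (hA : A < n)
    (hx' : (x + 1 = n ∧ x' = 0) ∨ (x + 1 < n ∧ x' = x + 1))
    (hj : j < n) (hj2 : j + x = A ∨ j + x = A + n)
    (hk : k < n) (hk2 : k + y = A ∨ k + y = A + n) :
    x' = y ↔ (j = k + 1 ∨ (j = 0 ∧ k + 1 = n)) := by
  rcases hj2 with hj2 | hj2 <;> rcases hk2 with hk2 | hk2 <;>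
  rcases hx' with hx' | hx' <;> constructor <;> intro h <;> omega

lemma succ_rel' (n C x y x' j k : ℕ) (hx : x < n) (hy : y < n) (hC : C < n)
    (hx' : (x + 1 = n ∧ x' = 0) ∨ (x + 1 < n ∧ x' = x + 1))
    (hj : j < n) (hj2 : j + C = x ∨ j + C = x + n)
    (hk : k < n) (hk2 : k + C = y ∨ k + C = y + n) :
    x' = y ↔ (k = j + 1 ∨ (k = 0 ∧ j + 1 = n)) := by
  rcases hj2 with hj2 | hj2 <;> rcases hk2 with hk2 | hk2 <;>
  rcases hx' with hx' | hx' <;> constructor <;> intro h <;> omega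

set_option maxHeartbeats 4000000 in
lemma arP (n A C B D x y x' y' : ℕ) (hn : 7 ≤ n) (hA : A < n) (hB : B < n) (hx : x < n)
    (hy : y < n)
    (hC : (A + 1 = n ∧ C = 0) ∨ (A + 1 < n ∧ C = A + 1))
    (hD : (B + 1 = n ∧ D = 0) ∨ (B + 1 < n ∧ D = B + 1))
    (hx' : (x + 1 = n ∧ x' = 0) ∨ (x + 1 < n ∧ x' = x + 1))
    (hy' : (y + 1 = n ∧ y' = 0) ∨ (y + 1 < n ∧ y' = y + 1))
    (hc : B = A + 2 ∨ B + n = A + 2) :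
    (((¬ x = y ∧ ¬ x' = y ∧ ¬ y' = x) ∧
      ¬ ((x = A ∧ y = B ∨ x = B ∧ y = A) ∨ (x = C ∧ y = D ∨ x = D ∧ y = C))) ∨
      (x = C ∧ y = A ∨ x = A ∧ y = C) ∧ ¬ x = y) ↔ AdjF n (posP n A x) (posP n A y) := by
  unfold posP
  obtain ⟨j, hj⟩ : ∃ j, j = (if x ≤ A then A - x else A + n - x) := ⟨_, rfl⟩
  obtain ⟨k, hk⟩ : ∃ k, k = (if y ≤ A then A - y else A + n - y) := ⟨_, rfl⟩
  rw [← hj, ← hk]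
  have hj2 : j < n ∧ (j + x = A ∨ j + x = A + n) := by split_ifs at hj <;> omega
  have hk2 : k < n ∧ (k + y = A ∨ k + y = A + n) := by split_ifs at hk <;> omega
  clear hj hk
  rw [adj_swp n j k hn hj2.1 hk2.1]
  have e2 : x' = y ↔ (j = k + 1 ∨ (j = 0 ∧ k + 1 = n)) := succ_rel n A x y x' j k hx hy (by omega) hx' hj2.1 hj2.2 hk2.1 hk2.2
  have e3 : y' = x ↔ (k = j + 1 ∨ (k = 0 ∧ j + 1 = n)) := succ_rel n A y x y' k j hy hx (by omega) hy' hk2.1 hk2.2 hj2.1 hj2.2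
  clear hx' hy'
  have e1 : x = y ↔ j = k := by clear e2 e3; omega
  have e4 : x = A ↔ j = 0 := by clear e1 e2 e3; omega
  have e5 : y = A ↔ k = 0 := by clear e1 e2 e3 e4; omega
  have e6 : x = B ↔ j + 2 = n := by clear e1 e2 e3 e4 e5; omega
  have e7 : y = B ↔ k + 2 = n := by clear e1 e2 e3 e4 e5 e6; omega
  have e8 : x = C ↔ j + 1 = n := by clear e1 e2 e3 e4 e5 e6 e7; omega
  have e9 : y = C ↔ k + 1 = n := by clear e1 e2 e3 e4 e5 e6 e7 e8; omega
  have e10 : x = D ↔ j + 3 = n := by clear e1 e2 e3 e4 e5 e6 e7 e8 e9; omega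
  have e11 : y = D ↔ k + 3 = n := by clear e1 e2 e3 e4 e5 e6 e7 e8 e9 e10; omega
  rw [e1, e2, e3, e4, e5, e6, e7, e8, e9, e10, e11]

set_option maxHeartbeats 4000000 in
lemma arM (n A C B D x y x' y' : ℕ) (hn : 7 ≤ n) (hA : A < n) (hB : B < n) (hx : x < n)
    (hy : y < n)
    (hC : (A + 1 = n ∧ C = 0) ∨ (A + 1 < n ∧ C = A + 1))
    (hD : (B + 1 = n ∧ D = 0) ∨ (B + 1 < n ∧ D = B + 1))
    (hx' : (x + 1 = n ∧ x' = 0) ∨ (x + 1 < n ∧ x' = x + 1))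
    (hy' : (y + 1 = n ∧ y' = 0) ∨ (y + 1 < n ∧ y' = y + 1))
    (hc : A = B + 2 ∨ A + n = B + 2) :
    (((¬ x = y ∧ ¬ x' = y ∧ ¬ y' = x) ∧
      ¬ ((x = A ∧ y = B ∨ x = B ∧ y = A) ∨ (x = C ∧ y = D ∨ x = D ∧ y = C))) ∨
      (x = C ∧ y = A ∨ x = A ∧ y = C) ∧ ¬ x = y) ↔ AdjF n (posM n C x) (posM n C y) := by
  unfold posM
  obtain ⟨j, hj⟩ : ∃ j, j = (if C ≤ x then x - C else x + n - C) := ⟨_, rfl⟩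
  obtain ⟨k, hk⟩ : ∃ k, k = (if C ≤ y then y - C else y + n - C) := ⟨_, rfl⟩
  rw [← hj, ← hk]
  have hj2 : j < n ∧ (j + C = x ∨ j + C = x + n) := by split_ifs at hj <;> omega
  have hk2 : k < n ∧ (k + C = y ∨ k + C = y + n) := by split_ifs at hk <;> omega
  clear hj hk
  rw [adj_swp n j k hn hj2.1 hk2.1]
  have e2 : x' = y ↔ (k = j + 1 ∨ (k = 0 ∧ j + 1 = n)) := succ_rel' n C x y x' j k hx hy (by omega) hx' hj2.1 hj2.2 hk2.1 hk2.2
  have e3 : y' = x ↔ (j = k + 1 ∨ (j = 0 ∧ k + 1 = n)) := succ_rel' n C y x y' k j hy hx (by omega) hy' hk2.1 hk2.2 hj2.1 hj2.2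
  clear hx' hy'
  have e1 : x = y ↔ j = k := by clear e2 e3; omega
  have e4 : x = A ↔ j + 1 = n := by clear e1 e2 e3; omega
  have e5 : y = A ↔ k + 1 = n := by clear e1 e2 e3 e4; omega
  have e6 : x = B ↔ j + 3 = n := by clear e1 e2 e3 e4 e5; omega
  have e7 : y = B ↔ k + 3 = n := by clear e1 e2 e3 e4 e5 e6; omega
  have e8 : x = C ↔ j = 0 := by clear e1 e2 e3 e4 e5 e6 e7; omega
  have e9 : y = C ↔ k = 0 := by clear e1 e2 e3 e4 e5 e6 e7 e8; omega
  have e10 : x = D ↔ j + 2 = n := by clear e1 e2 e3 e4 e5 e6 e7 e8 e9; omega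
  have e11 : y = D ↔ k + 2 = n := by clear e1 e2 e3 e4 e5 e6 e7 e8 e9 e10; omega
  rw [e1, e2, e3, e4, e5, e6, e7, e8, e9, e10, e11]
  exact or_congr (and_congr (and_congr_right' and_comm) (not_congr or_comm)) (and_congr_left' or_comm)

/-- Theorem A / Theorem `cor1`: for `n ≥ 7` and `a, b ∈ [n]` with `|a - b| ≡ ±2 (mod n)`,
removing the edges `{a, b}` and `{a+1 mod n, b+1 mod n}` from the anticycle `A_n` and
adding the edge `{a+1 mod n, a}` yields a graph `H` with `I_H^s` having linear quotients
for `s = 2, 3`.  (Vertex `v ∈ [n]` corresponds to the index `v - 1` of `Fin n`; the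
vertex `(c mod n) ∈ [n]` for `c = a + 1` corresponds to the index `a % n`.) -/
theorem modified_anticycle_square_cube_linear_quotients
    (K : Type*) [Field K] (n a b : ℕ) (hn : 7 ≤ n)
    (ha1 : 1 ≤ a) (han : a ≤ n) (hb1 : 1 ≤ b) (hbn : b ≤ n)
    (hab : |(a : ℤ) - (b : ℤ)| ≡ 2 [ZMOD (n : ℤ)] ∨ |(a : ℤ) - (b : ℤ)| ≡ -2 [ZMOD (n : ℤ)]) :
    ∀ s : ℕ, s = 2 ∨ s = 3 →
      HasLinearQuotients
        ((edgeIdeal K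
          (((anticycle n).deleteEdges
              {s(⟨a - 1, by omega⟩, ⟨b - 1, by omega⟩),
               s(⟨a % n, Nat.mod_lt _ (by omega)⟩, ⟨b % n, Nat.mod_lt _ (by omega)⟩)}) ⊔
            SimpleGraph.fromEdgeSet
              {s(⟨a % n, Nat.mod_lt _ (by omega)⟩, ⟨a - 1, by omega⟩)})) ^ s) := by
  intro s hs
  have hs2 : 2 ≤ s := by omega
  have hcase : (b = a + 2 ∨ b + n = a + 2) ∨ (a = b + 2 ∨ a + n = b + 2) := by
    have h0 : (0:ℤ) ≤ |(a : ℤ) - (b : ℤ)| := abs_nonneg _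
    have h1 : |(a : ℤ) - (b : ℤ)| < n := by rw [abs_lt]; omega
    have h2 : |(a : ℤ) - (b : ℤ)| = 2 ∨ |(a : ℤ) - (b : ℤ)| = n - 2 := by
      rcases hab with h | h
      · left
        have h := h.symm.dvd
        obtain ⟨c, hc⟩ := h
        have : c = 0 := by nlinarith
        subst this
        omega
      · right
        have h := h.symm.dvd
        obtain ⟨c, hc⟩ := h
        have : c = 1 := by nlinarith
        subst this
        omega
    rcases abs_cases ((a : ℤ) - (b : ℤ)) with h | h <;> omega
  have ma : (a - 1 + 1 = n ∧ a % n = 0) ∨ (a - 1 + 1 < n ∧ a % n = a - 1 + 1) := by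
    have := succ_mod_spec n (a - 1) (by omega)
    rwa [Nat.sub_add_cancel ha1] at this ⊢
  have mb : (b - 1 + 1 = n ∧ b % n = 0) ∨ (b - 1 + 1 < n ∧ b % n = b - 1 + 1) := by
    have := succ_mod_spec n (b - 1) (by omega)
    rwa [Nat.sub_add_cancel hb1] at this ⊢
  have ha' : a % n < n := Nat.mod_lt _ (by omega)
  rcases hcase with hc | hc
  · refine main_pos K hn _ (posP n (a - 1)) ?_ ?_ ?_ s hs2
    · intro x hx
      unfold posP
      apply swp_lt n _ hn
      split_ifs <;> omega
    · intro x y hx hy h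
      unfold posP at h
      have h := swp_inj n _ _ hn (by split_ifs <;> omega) (by split_ifs <;> omega) h
      split_ifs at h <;> omega
    · rintro ⟨x, hx⟩ ⟨y, hy⟩
      simp only [SimpleGraph.sup_adj, SimpleGraph.deleteEdges_adj, SimpleGraph.fromEdgeSet_adj,
        anticycle, Set.mem_insert_iff, Set.mem_singleton_iff, Sym2.eq_iff, Fin.ext_iff, ne_eq,
        Fin.mk.injEq]
      exact arP n (a - 1) (a % n) (b - 1) (b % n) x y ((x + 1) % n) ((y + 1) % n) hn (by omega)
        (by omega) hx hy ma mb (succ_mod_spec n x hx) (succ_mod_spec n y hy) (by omega)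
  · refine main_pos K hn _ (posM n (a % n)) ?_ ?_ ?_ s hs2
    · intro x hx
      unfold posM
      apply swp_lt n _ hn
      split_ifs <;> omega
    · intro x y hx hy h
      unfold posM at h
      have h := swp_inj n _ _ hn (by split_ifs <;> omega) (by split_ifs <;> omega) h
      split_ifs at h <;> omega
    · rintro ⟨x, hx⟩ ⟨y, hy⟩
      simp only [SimpleGraph.sup_adj, SimpleGraph.deleteEdges_adj, SimpleGraph.fromEdgeSet_adj,
        anticycle, Set.mem_insert_iff, Set.mem_singleton_iff, Sym2.eq_iff, Fin.ext_iff, ne_eq,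
        Fin.mk.injEq]
      exact arM n (a - 1) (a % n) (b - 1) (b % n) x y ((x + 1) % n) ((y + 1) % n) hn (by omega)
        (by omega) hx hy ma mb (succ_mod_spec n x hx) (succ_mod_spec n y hy) (by omega)
end
end

section
/- Fix n ≥ 6 and let H_n be the graph on [n] obtained from the anticycle on n vertices by removing the edges {n−2, n} and {1, n−1} and adding the edge {1, n}. Then I_{H_n}^s has linear quotients for s = 2 and for s = 3. -/
open MvPolynomial

noncomputable section

/-- feasibility of an exponent vector -/
structure Feas (l s : ℕ) (f : ℕ → ℕ) : Prop where
  pair : ∀ i, i ≤ l + 3 → f i + f (i + 1) ≤ s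
  wrap : f 0 + f (l + 4) ≤ s
  tri : f (l + 3) + f (l + 4) + f (l + 5) ≤ s
  sum : ∑ i ∈ Finset.range (l + 6), f i = 2 * s

def RR (l : ℕ) (f : ℕ → ℕ) : ℕ := ∑ i ∈ Finset.range (l + 1), f (i + 1)

lemma sum_split (l : ℕ) (f : ℕ → ℕ) : ∑ i ∈ Finset.range (l + 6), f i =
    f 0 + RR l f + f (l + 2) + f (l + 3) + f (l + 4) + f (l + 5) := by
  rw [Finset.sum_range_succ, Finset.sum_range_succ, Finset.sum_range_succ, Finset.sum_range_succ,
    Finset.sum_range_succ', RR]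
  ring

def Out (l : ℕ) (f : ℕ → ℕ) : Prop := ∃ i, ((1 ≤ i ∧ i ≤ l + 1) ∨ i = l + 5) ∧ 0 < f i

lemma RR_pos {l : ℕ} {f : ℕ → ℕ} (h : 0 < RR l f) : ∃ i, 1 ≤ i ∧ i ≤ l + 1 ∧ 0 < f i := by
  by_contra hc
  push Not at hc
  have : RR l f = 0 := by
    apply Finset.sum_eq_zero
    intro i hi
    have := hc (i + 1) (by omega) (by have := Finset.mem_range.1 hi; omega)
    omega
  omega

lemma le_RR {l : ℕ} {f : ℕ → ℕ} (i : ℕ) (h1 : 1 ≤ i) (h2 : i ≤ l + 1) : f i ≤ RR l f := by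
  obtain ⟨j, rfl⟩ : ∃ j, i = j + 1 := ⟨i - 1, by omega⟩
  exact Finset.single_le_sum (f := fun i => f (i + 1)) (fun _ _ => Nat.zero_le _)
    (Finset.mem_range.2 (by omega))

lemma le_RR2 {l : ℕ} {f : ℕ → ℕ} (i : ℕ) (h1 : 1 ≤ i) (h2 : i ≤ l) :
    f i + f (i + 1) ≤ RR l f := by
  obtain ⟨j, rfl⟩ : ∃ j, i = j + 1 := ⟨i - 1, by omega⟩
  have : ∑ x ∈ ({j, j + 1} : Finset ℕ), f (x + 1) ≤ RR l f := by
    apply Finset.sum_le_sum_of_subset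
    intro x hx
    simp only [Finset.mem_insert, Finset.mem_singleton] at hx
    exact Finset.mem_range.2 (by omega)
  rwa [Finset.sum_pair (by omega)] at this

lemma RR_two {l : ℕ} {f : ℕ → ℕ} (h : 2 ≤ RR l f) : ∃ b c, 1 ≤ b ∧ b ≤ l + 1 ∧ 1 ≤ c ∧ c ≤ l + 1 ∧
    0 < f b ∧ 0 < f c ∧ (b = c → 2 ≤ f b) := by
  obtain ⟨b, hb1, hb2, hb⟩ := RR_pos (l := l) (f := f) (by omega)
  by_cases h2 : 2 ≤ f b
  · exact ⟨b, b, hb1, hb2, hb1, hb2, hb, hb, fun _ => h2⟩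
  by_cases h3 : ∃ c, 1 ≤ c ∧ c ≤ l + 1 ∧ 0 < f c ∧ c ≠ b
  · obtain ⟨c, hc1, hc2, hc, hcb⟩ := h3
    exact ⟨b, c, hb1, hb2, hc1, hc2, hb, hc, fun h => absurd h.symm hcb⟩
  exfalso
  push Not at h3
  have : RR l f = f (b - 1 + 1) := by
    apply Finset.sum_eq_single (b - 1)
    · intro i hi hne
      by_contra hh
      have := h3 (i + 1) (by omega) (by have := Finset.mem_range.1 hi; omega) (by omega)
      omega
    · intro hh
      exact absurd (Finset.mem_range.2 (by omega)) hh
  have e : b - 1 + 1 = b := by omega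
  rw [e] at this
  omega

lemma RR_lt {l : ℕ} {u v : ℕ → ℕ} (h : RR l v < RR l u) : ∃ i, 1 ≤ i ∧ i ≤ l + 1 ∧ v i < u i := by
  obtain ⟨i, hi, h⟩ := Finset.exists_lt_of_sum_lt h
  exact ⟨i + 1, by omega, by have := Finset.mem_range.1 hi; omega, h⟩

lemma not_out {l : ℕ} {f : ℕ → ℕ} (h : ¬ Out l f) : RR l f = 0 ∧ f (l + 5) = 0 := by
  constructor
  · by_contra hh
    obtain ⟨i, h1, h2, h3⟩ := RR_pos (Nat.pos_of_ne_zero hh)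
    exact h ⟨i, Or.inl ⟨h1, h2⟩, h3⟩
  · by_contra hh
    exact h ⟨l + 5, Or.inr rfl, Nat.pos_of_ne_zero hh⟩

lemma out_RR {l : ℕ} {f : ℕ → ℕ} (h : Out l f) : 0 < RR l f + f (l + 5) := by
  obtain ⟨i, h | rfl, h2⟩ := h
  · have := le_RR (f := f) i h.1 h.2
    omega
  · omega

def mv (v : ℕ → ℕ) (a b : ℕ) : ℕ → ℕ := fun i => if i = a then v i + 1 else if i = b then v i - 1
  else v i

lemma mv_feas {l s : ℕ} {v : ℕ → ℕ} (hv : Feas l s v) {a b : ℕ} (ha : a < l + 6) (hb : b < l + 6)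
    (hab : a ≠ b) (hpos : 0 < v b)
    (h1 : a ≤ l + 3 → b = a + 1 ∨ v a + v (a + 1) < s)
    (h2 : ∀ a', a = a' + 1 → a ≤ l + 4 → b = a' ∨ v a' + v a < s)
    (h3 : a = 0 ∨ a = l + 4 → b = 0 ∨ b = l + 4 ∨ v 0 + v (l + 4) < s)
    (h4 : a = l + 3 ∨ a = l + 4 ∨ a = l + 5 → b = l + 3 ∨ b = l + 4 ∨ b = l + 5 ∨
      v (l + 3) + v (l + 4) + v (l + 5) < s) : Feas l s (mv v a b) := by
  refine ⟨?_, ?_, ?_, ?_⟩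
  · intro i hi
    have := hv.pair i hi
    have h2' := h2 i
    unfold mv
    grind
  · have := hv.wrap
    unfold mv
    grind
  · have := hv.tri
    unfold mv
    grind
  · have h := hv.sum
    have ha' := Finset.mem_range.2 ha
    have hb' : b ∈ (Finset.range (l + 6)).erase a := Finset.mem_erase.2 ⟨hab.symm, Finset.mem_range.2 hb⟩
    rw [← Finset.add_sum_erase _ _ ha', ← Finset.add_sum_erase _ _ hb'] at h ⊢
    have e : ∑ x ∈ ((Finset.range (l + 6)).erase a).erase b, mv v a b x =
        ∑ x ∈ ((Finset.range (l + 6)).erase a).erase b, v x := by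
      apply Finset.sum_congr rfl
      intro x hx
      simp only [Finset.mem_erase] at hx
      unfold mv
      grind
    rw [e]
    unfold mv
    grind

/-- top difference gives something smaller below -/
lemma below {l s : ℕ} {u v : ℕ → ℕ} (hu : Feas l s u) (hv : Feas l s v) {k : ℕ} (hk : k < l + 6)
    (h : v k < u k) (heq : ∀ j, k < j → j < l + 6 → u j = v j) : ∃ b, b < k ∧ u b < v b := by
  by_contra hc
  push Not at hc
  have : ∑ i ∈ Finset.range (l + 6), v i < ∑ i ∈ Finset.range (l + 6), u i := by
    apply Finset.sum_lt_sum
    · intro i hi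
      rcases lt_trichotomy i k with h1 | rfl | h1
      · exact hc i h1
      · exact h.le
      · exact (heq i h1 (Finset.mem_range.1 hi)).ge
    · exact ⟨k, Finset.mem_range.2 hk, h⟩
  rw [hu.sum, hv.sum] at this
  omega

set_option maxHeartbeats 2000000 in
/-- exchange for vectors with outside support -/
lemma exch_out {l s : ℕ} (hs : 2 ≤ s) {u v : ℕ → ℕ} (hu : Feas l s u) (hv : Feas l s v)
    (ou : Out l u) (ov : Out l v) {k : ℕ} (hk : k < l + 6)
    (h : v k < u k) (heq : ∀ j, k < j → j < l + 6 → u j = v j) :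
    ∃ a b, a < l + 6 ∧ b < a ∧ v a < u a ∧ 0 < v b ∧ Feas l s (mv v a b) ∧ Out l (mv v a b) := by
  obtain ⟨b0, hb0, hb0'⟩ := below hu hv hk h heq
  have su := hu.sum
  have sv := hv.sum
  rw [sum_split] at su sv
  have ut := hu.tri
  have uw := hu.wrap
  have vt := hv.tri
  have vw := hv.wrap
  have key : ∀ a b, a < l + 6 → b < a → v a < u a → 0 < v b → Feas l s (mv v a b) →
      Out l (mv v a b) → ∃ a b, a < l + 6 ∧ b < a ∧ v a < u a ∧ 0 < v b ∧ Feas l s (mv v a b) ∧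
        Out l (mv v a b) := fun a b h1 h2 h3 h4 h5 h6 => ⟨a, b, h1, h2, h3, h4, h5, h6⟩
  -- if the removed vertex is not outside then w is Out
  have keepOut : ∀ a b, a ≠ b → (b = 0 ∨ b = l + 2 ∨ b = l + 3 ∨ b = l + 4) → Out l (mv v a b) := by
    intro a b hab hb
    obtain ⟨i, hi, hi'⟩ := ov
    refine ⟨i, hi, ?_⟩
    unfold mv
    grind
  have newOut : ∀ a b, ((1 ≤ a ∧ a ≤ l + 1) ∨ a = l + 5) → Out l (mv v a b) := by
    intro a b ha
    exact ⟨a, ha, by simp [mv]⟩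
  have upair := hu.pair
  have vpair := hv.pair
  -- removing from rest
  have rest : 2 ≤ RR l v → ∃ b, 1 ≤ b ∧ b ≤ l + 1 ∧ 0 < v b ∧ ∀ a, Out l (mv v a b) := by
    intro h2
    obtain ⟨b, c, hb1, hb2, hc1, hc2, hb, hc, hbc⟩ := RR_two h2
    refine ⟨b, hb1, hb2, hb, fun a => ⟨c, Or.inl ⟨hc1, hc2⟩, ?_⟩⟩
    unfold mv
    grind
  obtain hk5 | hk4 | hk3 | hk2 | hk1 : k = l + 5 ∨ k = l + 4 ∨ k = l + 3 ∨ k = l + 2 ∨ k ≤ l + 1 := by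
    omega
  · subst hk5
    have fe : ∀ b, b < l + 5 → 0 < v b → (b = l + 3 ∨ b = l + 4 ∨ v (l+3) + v (l+4) + v (l+5) < s) →
      Feas l s (mv v (l+5) b) := by
      intro b hb hb' hh
      apply mv_feas hv <;> first | omega | grind
    by_cases h4 : 0 < v (l + 4)
    · exact key (l+5) (l+4) hk (by omega) h h4 (fe _ (by omega) h4 (by omega)) (newOut _ _ (by omega))
    by_cases h3 : 0 < v (l + 3)
    · exact key (l+5) (l+3) hk (by omega) h h3 (fe _ (by omega) h3 (by omega)) (newOut _ _ (by omega))
    exact key (l+5) b0 hk hb0 h (by omega) (fe _ hb0 (by omega) (by omega)) (newOut _ _ (by omega))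
  · subst hk4
    have e5 := heq (l + 5) (by omega) (by omega)
    have fe : ∀ b, b < l + 4 → 0 < v b → (b = l + 3 ∨ v (l+3) + v (l+4) + v (l+5) < s) →
        (b = 0 ∨ v 0 + v (l + 4) < s) → Feas l s (mv v (l+4) b) := by
      intro b hb hb' hh hh'
      apply mv_feas hv <;> first | omega | grind
    by_cases t1 : v (l+3) + v (l+4) + v (l+5) < s
    · by_cases p0 : 0 < v 0
      · exact key (l+4) 0 hk (by omega) h p0 (fe _ (by omega) p0 (by omega) (by omega))
          (keepOut _ _ (by omega) (by omega))
      have t2 : v 0 + v (l + 4) < s := by omega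
      by_cases p3 : 0 < v (l + 3)
      · exact key (l+4) (l+3) hk (by omega) h p3 (fe _ (by omega) p3 (by omega) (by omega))
          (keepOut _ _ (by omega) (by omega))
      by_cases p2 : 0 < v (l + 2)
      · exact key (l+4) (l+2) hk (by omega) h p2 (fe _ (by omega) p2 (by omega) (by omega))
          (keepOut _ _ (by omega) (by omega))
      obtain ⟨b, hb1, hb2, hb, hbo⟩ := rest (by omega)
      exact key (l+4) b hk (by omega) h hb (fe _ (by omega) hb (by omega) (by omega)) (hbo _)
    by_cases t2 : v 0 + v (l + 4) < s
    · have p3 : 0 < v (l + 3) := by omega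
      exact key (l+4) (l+3) hk (by omega) h p3 (fe _ (by omega) p3 (by omega) (by omega))
          (keepOut _ _ (by omega) (by omega))
    have p0 : 0 < v 0 := by omega
    have fe2 : ∀ a, 1 ≤ a → a ≤ l + 1 → Feas l s (mv v a 0) := by
      intro a ha1 ha2
      apply mv_feas hv
      · omega
      · omega
      · omega
      · omega
      · intro _
        right
        rcases Nat.lt_or_ge l a with h' | h'
        · obtain rfl : a = l + 1 := by omega
          have := le_RR (l := l) (f := v) (l + 1) (by omega) (by omega)
          show v (l + 1) + v (l + 2) < s
          omega
        · have := le_RR2 (l := l) (f := v) a ha1 h'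
          omega
      · rintro a' rfl _
        rcases Nat.eq_zero_or_pos a' with rfl | h'
        · simp
        · have := le_RR2 (l := l) (f := v) a' h' (by omega)
          omega
      · omega
      · omega
    by_cases hR : RR l v < RR l u
    · obtain ⟨a, ha1, ha2, ha⟩ := RR_lt hR
      exact key a 0 (by omega) (by omega) ha p0 (fe2 a ha1 ha2) (newOut _ _ (by omega))
    have h2 : v (l + 2) < u (l + 2) := by omega
    refine key (l + 2) 0 (by omega) (by omega) h2 p0 ?_ (keepOut _ _ (by omega) (by omega))
    have hout := out_RR ov
    have := le_RR (l := l) (f := v) (l + 1) (by omega) (by omega)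
    apply mv_feas hv
    · omega
    · omega
    · omega
    · omega
    · intro _
      right
      show v (l + 2) + v (l + 3) < s
      omega
    · intro a' ha' _
      obtain rfl : a' = l + 1 := by omega
      right
      omega
    · omega
    · omega
  · subst hk3
    have e5 := heq (l + 5) (by omega) (by omega)
    have e4 := heq (l + 4) (by omega) (by omega)
    have v23 : v (l + 2) + v (l + 3) ≤ s := vpair (l + 2) (by omega)
    have u23 : u (l + 2) + u (l + 3) ≤ s := upair (l + 2) (by omega)
    have fe : ∀ b, b < l + 3 → 0 < v b → (b = l + 2 ∨ v (l+2) + v (l+3) < s) →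
        Feas l s (mv v (l+3) b) := by
      intro b hb hb' hh
      apply mv_feas hv
      · omega
      · omega
      · omega
      · omega
      · intro _
        right
        show v (l + 3) + v (l + 4) < s
        omega
      · intro a' ha' _
        obtain rfl : a' = l + 2 := by omega
        exact hh
      · omega
      · omega
    by_cases t : v (l+2) + v (l+3) < s
    · by_cases p0 : 0 < v 0
      · exact key (l+3) 0 hk (by omega) h p0 (fe _ (by omega) p0 (by omega))
          (keepOut _ _ (by omega) (by omega))
      by_cases p2 : 0 < v (l + 2)
      · exact key (l+3) (l+2) hk (by omega) h p2 (fe _ (by omega) p2 (by omega))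
          (keepOut _ _ (by omega) (by omega))
      obtain ⟨b, hb1, hb2, hb, hbo⟩ := rest (by omega)
      exact key (l+3) b hk (by omega) h hb (fe _ (by omega) hb (by omega)) (hbo _)
    have p2 : 0 < v (l + 2) := by omega
    exact key (l+3) (l+2) hk (by omega) h p2 (fe _ (by omega) p2 (by omega))
          (keepOut _ _ (by omega) (by omega))
  · subst hk2
    have e5 := heq (l + 5) (by omega) (by omega)
    have e4 := heq (l + 4) (by omega) (by omega)
    have e3 := heq (l + 3) (by omega) (by omega)
    have v12 : v (l + 1) + v (l + 2) ≤ s := vpair (l + 1) (by omega)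
    have u12 : u (l + 1) + u (l + 2) ≤ s := upair (l + 1) (by omega)
    have u23 : u (l + 2) + u (l + 3) ≤ s := upair (l + 2) (by omega)
    have fe : ∀ b, b < l + 2 → 0 < v b → (b = l + 1 ∨ v (l+1) + v (l+2) < s) →
        Feas l s (mv v (l+2) b) := by
      intro b hb hb' hh
      apply mv_feas hv
      · omega
      · omega
      · omega
      · omega
      · intro _
        right
        show v (l + 2) + v (l + 3) < s
        omega
      · intro a' ha' _
        obtain rfl : a' = l + 1 := by omega
        exact hh
      · omega
      · omega
    have ou' := out_RR ou
    have ov' := out_RR ov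
    by_cases t : v (l+1) + v (l+2) < s
    · by_cases p0 : 0 < v 0
      · exact key (l+2) 0 hk (by omega) h p0 (fe _ (by omega) p0 (by omega))
          (keepOut _ _ (by omega) (by omega))
      by_cases p5 : 0 < v (l + 5)
      · refine key (l+2) b0 hk (by omega) h (by omega) (fe _ (by omega) (by omega) (by omega)) 
          ⟨l + 5, Or.inr rfl, ?_⟩
        unfold mv
        grind
      obtain ⟨b, hb1, hb2, hb, hbo⟩ := rest (by omega)
      exact key (l+2) b hk (by omega) h hb (fe _ (by omega) hb (by omega)) (hbo _)
    have p1 : 0 < v (l + 1) := by omega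
    have lr := le_RR (l := l) (f := v) (l + 1) (by omega) (by omega)
    by_cases ow : Out l (mv v (l+2) (l+1))
    · exact key (l+2) (l+1) hk (by omega) h p1 (fe _ (by omega) p1 (by omega)) ow
    have vz : ∀ i, ((1 ≤ i ∧ i ≤ l) ∨ i = l + 5) → v i = 0 := by
      intro i hi
      by_contra hne
      apply ow
      refine ⟨i, by omega, ?_⟩
      unfold mv
      grind
    have v1 : v (l + 1) = 1 := by
      by_contra hne
      apply ow
      refine ⟨l + 1, by omega, ?_⟩
      unfold mv
      grind
    have v5 := vz (l + 5) (by omega)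
    have R1 : RR l v ≤ 1 := by
      by_contra hR
      obtain ⟨b, hb1, hb2, hb, hbo⟩ := rest (by omega)
      have : b = l + 1 := by
        by_contra hne
        have := vz b (by omega)
        omega
      subst this
      exact ow (hbo _)
    obtain ⟨a, ha1, ha2, ha⟩ := RR_pos (l := l) (f := u) (by omega)
    have hal : a ≤ l := by
      by_contra hne
      obtain rfl : a = l + 1 := by omega
      omega
    have va := vz a (by omega)
    refine key a 0 (by omega) (by omega) (by omega) (by omega) ?_ (newOut _ _ (by omega))
    have le2 := le_RR2 (l := l) (f := v) a ha1 hal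
    apply mv_feas hv
    · omega
    · omega
    · omega
    · omega
    · intro _
      omega
    · rintro a' rfl _
      rcases Nat.eq_zero_or_pos a' with rfl | h'
      · simp
      · have := vz a' (by omega)
        omega
    · omega
    · omega
  · have e1 := heq (k + 1) (by omega) (by omega)
    have u1 := upair k (by omega)
    obtain ⟨k', rfl⟩ : ∃ k', k = k' + 1 := ⟨k - 1, by omega⟩
    have u2 := upair k' (by omega)
    have v2 := vpair k' (by omega)
    have fe : ∀ b, b < k' + 1 → 0 < v b → (b = k' ∨ v k' + v (k' + 1) < s) →
        Feas l s (mv v (k' + 1) b) := by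
      intro b hb hb' hh
      apply mv_feas hv
      · omega
      · omega
      · omega
      · omega
      · intro _
        omega
      · intro a' ha' _
        obtain rfl : a' = k' := by omega
        exact hh
      · omega
      · omega
    by_cases t : v k' + v (k' + 1) < s
    · exact key (k' + 1) b0 hk (by omega) h (by omega) (fe _ (by omega) (by omega) (by omega))
        (newOut _ _ (by omega))
    · have p : 0 < v k' := by omega
      exact key (k' + 1) k' hk (by omega) h (by omega) (fe _ (by omega) (by omega) (by omega))
        (newOut _ _ (by omega))

open Classical in
noncomputable def rk (l s : ℕ) (f : ℕ → ℕ) : ℕ :=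
  if Out l f then 0 else if f 0 = s ∧ f (l + 3) = 0 then s + 5 else 1 + f (l + 3)

lemma rk_out {l s : ℕ} {f : ℕ → ℕ} (h : Out l f) : rk l s f = 0 := by simp [rk, h]

lemma rk_top {l s : ℕ} {f : ℕ → ℕ} (h : ¬ Out l f) (h1 : f 0 = s) (h2 : f (l + 3) = 0) :
    rk l s f = s + 5 := by simp [rk, h, h1, h2]

lemma rk_mid {l s : ℕ} {f : ℕ → ℕ} (h : ¬ Out l f) (h1 : ¬ (f 0 = s ∧ f (l + 3) = 0)) :
    rk l s f = 1 + f (l + 3) := by simp [rk, h, h1]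

lemma in_eqs {l s : ℕ} {f : ℕ → ℕ} (hf : Feas l s f) (h : ¬ Out l f) :
    f 0 + f (l + 4) = s ∧ f (l + 2) + f (l + 3) = s ∧ f (l + 5) = 0 ∧
      ∀ i, 1 ≤ i → i ≤ l + 1 → f i = 0 := by
  obtain ⟨h1, h2⟩ := not_out h
  have := hf.sum
  rw [sum_split] at this
  have h3 : f (l + 2) + f (l + 3) ≤ s := hf.pair (l + 2) (by omega)
  have h4 := hf.wrap
  refine ⟨by omega, by omega, h2, ?_⟩
  intro i hi1 hi2
  have := le_RR (l := l) (f := f) i hi1 hi2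
  omega

set_option maxHeartbeats 2000000 in
lemma exch_in {l s : ℕ} (hs : 2 ≤ s) {u v : ℕ → ℕ} (hu : Feas l s u) (hv : Feas l s v)
    (ov : ¬ Out l v)
    (hlt : rk l s u < rk l s v ∨ (rk l s u = rk l s v ∧
      ∃ k, k < l + 6 ∧ v k < u k ∧ ∀ j, k < j → j < l + 6 → u j = v j)) :
    ∃ a b, a < l + 6 ∧ b < l + 6 ∧ a ≠ b ∧ v a < u a ∧ 0 < v b ∧ Feas l s (mv v a b) ∧
      (rk l s (mv v a b) < rk l s v ∨ (rk l s (mv v a b) = rk l s v ∧ b < a)) := by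
  obtain ⟨v04, v23, v5, vz⟩ := in_eqs hv ov
  have vt := hv.tri
  have ut := hu.tri
  have uw := hu.wrap
  have u23 : u (l + 2) + u (l + 3) ≤ s := hu.pair (l + 2) (by omega)
  have newOut : ∀ a b, ((1 ≤ a ∧ a ≤ l + 1) ∨ a = l + 5) → rk l s (mv v a b) < rk l s v := by
    intro a b ha
    have : Out l (mv v a b) := ⟨a, ha, by simp [mv]⟩
    rw [rk_out this]
    by_cases h : v 0 = s ∧ v (l + 3) = 0
    · rw [rk_top ov h.1 h.2]
      omega
    · rw [rk_mid ov h]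
      omega
  have stayIn : ∀ a b, (a = 0 ∨ a = l + 2 ∨ a = l + 3 ∨ a = l + 4) → ¬ Out l (mv v a b) := by
    rintro a b ha ⟨i, hi, hi'⟩
    have : v i = 0 := by
      rcases hi with hi | rfl
      · exact vz i hi.1 hi.2
      · exact v5
    unfold mv at hi'
    grind
  -- feasibility of moves
  have fe40 : 0 < v 0 → v (l + 3) + v (l + 4) < s → Feas l s (mv v (l + 4) 0) := by
    intro h0 h
    apply mv_feas hv
    · omega
    · omega
    · omega
    · omega
    · omega
    · intro a' ha' _
      obtain rfl : a' = l + 3 := by omega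
      right
      omega
    · omega
    · omega
  have fe5 : 0 < u (l + 5) → ∃ a b, a < l + 6 ∧ b < l + 6 ∧ a ≠ b ∧ v a < u a ∧ 0 < v b ∧
      Feas l s (mv v a b) ∧
      (rk l s (mv v a b) < rk l s v ∨ (rk l s (mv v a b) = rk l s v ∧ b < a)) := by
    intro h5
    have : ∃ b, b < l + 5 ∧ 0 < v b ∧ (b = l + 3 ∨ b = l + 4 ∨
        v (l + 3) + v (l + 4) + v (l + 5) < s) := by
      by_cases h4 : 0 < v (l + 4)
      · exact ⟨l + 4, by omega, h4, by omega⟩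
      by_cases h3 : 0 < v (l + 3)
      · exact ⟨l + 3, by omega, h3, by omega⟩
      exact ⟨0, by omega, by omega, by omega⟩
    obtain ⟨b, hb, hb', hb''⟩ := this
    refine ⟨l + 5, b, by omega, by omega, by omega, by omega, hb', ?_,
      Or.inl (newOut _ _ (by omega))⟩
    apply mv_feas hv <;> omega
  have feo : ∀ a b, 1 ≤ a → a ≤ l + 1 → b < l + 6 → a ≠ b → 0 < v b → 0 < u a →
      (a = l + 1 → b = l + 2 ∨ v (l + 2) < s) → (a = 1 → b = 0 ∨ v 0 < s) →
      ∃ a b, a < l + 6 ∧ b < l + 6 ∧ a ≠ b ∧ v a < u a ∧ 0 < v b ∧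
      Feas l s (mv v a b) ∧
      (rk l s (mv v a b) < rk l s v ∨ (rk l s (mv v a b) = rk l s v ∧ b < a)) := by
    intro a b ha1 ha2 hb hab hvb hua h1 h2
    have va := vz a ha1 ha2
    refine ⟨a, b, by omega, hb, hab, by omega, hvb, ?_, Or.inl (newOut _ _ (by omega))⟩
    apply mv_feas hv
    · omega
    · omega
    · omega
    · omega
    · intro _
      by_cases e : a = l + 1
      · have := h1 e
        subst e
        rcases this with h | h
        · left
          exact h
        · right
          show v (l + 1) + v (l + 2) < s
          omega
      · have := vz (a + 1) (by omega) (by omega)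
        omega
    · rintro a' rfl _
      rcases Nat.eq_zero_or_pos a' with rfl | h'
      · rcases h2 rfl with h | h
        · exact Or.inl h
        · right
          omega
      · have := vz a' (by omega) (by omega)
        omega
    · omega
    · omega
  by_cases top : v 0 = s ∧ v (l + 3) = 0
  · obtain ⟨t0, t3⟩ := top
    have rv := rk_top ov t0 t3
    by_cases p4 : 0 < u (l + 4)
    · refine ⟨l + 4, 0, by omega, by omega, by omega, by omega, by omega,
        fe40 (by omega) (by omega), Or.inl ?_⟩
      rw [rv, rk_mid (stayIn _ _ (by omega)) (by simp [mv]; omega)]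
      simp [mv]
      omega
    by_cases p3 : 0 < u (l + 3)
    · refine ⟨l + 3, l + 2, by omega, by omega, by omega, by omega, by omega, ?_, Or.inl ?_⟩
      · apply mv_feas hv
        · omega
        · omega
        · omega
        · omega
        · intro _
          right
          show v (l + 3) + v (l + 4) < s
          omega
        · omega
        · omega
        · omega
      rw [rv, rk_mid (stayIn _ _ (by omega)) (by simp [mv])]
      simp [mv]
      omega
    by_cases p5 : 0 < u (l + 5)
    · exact fe5 p5
    have su := hu.sum
    rw [sum_split] at su
    by_cases pR : 0 < RR l u
    · obtain ⟨a, ha1, ha2, ha⟩ := RR_pos pR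
      by_cases a1 : a = 1
      · subst a1
        refine feo 1 0 (by omega) (by omega) (by omega) (by omega) (by omega) ha ?_ (by omega)
        intro hl
        obtain rfl : l = 0 := by omega
        exfalso
        have : RR 0 u = u 1 := by simp [RR]
        have h01 : u 0 + u 1 ≤ s := hu.pair 0 (by omega)
        have h12 : u 1 + u (0 + 2) ≤ s := hu.pair 1 (by omega)
        omega
      · exact feo a (l + 2) (by omega) (by omega) (by omega) (by omega) (by omega) ha (by omega)
          (by omega)
    · exfalso
      -- u = v
      have ou : ¬ Out l u := by
        intro h
        have := out_RR h
        omega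
      have ru := rk_top (s := s) ou (by omega) (by omega)
      rcases hlt with h | ⟨_, k, hk, hk', heq⟩
      · omega
      · obtain ⟨b0, hb0, hb0'⟩ := below hu hv hk hk' heq
        obtain ⟨_, _, _, uz⟩ := in_eqs hu ou
        obtain rfl | rfl | rfl | rfl | rfl | hh : k = l + 5 ∨ k = l + 4 ∨ k = l + 3 ∨ k = l + 2 ∨
          k = 0 ∨ (1 ≤ k ∧ k ≤ l + 1) := by omega
        · omega
        · omega
        · omega
        · omega
        · omega
        · have := uz k hh.1 hh.2
          omega
  have rv := rk_mid (s := s) ov top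
  by_cases ou : Out l u
  · by_cases p5 : 0 < u (l + 5)
    · exact fe5 p5
    obtain ⟨a, ha | ha, hpos⟩ := ou
    swap
    · exfalso
      subst ha
      omega
    by_cases c1 : a = 1 ∧ v 0 = s
    · exact feo a 0 (by omega) (by omega) (by omega) (by omega) (by omega) hpos (by omega) (by omega)
    by_cases c2 : v (l + 2) = s
    · exact feo a (l + 2) (by omega) (by omega) (by omega) (by omega) (by omega) hpos (by omega)
        (by omega)
    by_cases p0 : 0 < v 0
    · exact feo a 0 (by omega) (by omega) (by omega) (by omega) (by omega) hpos (by omega)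
        (by omega)
    · exact feo a (l + 4) (by omega) (by omega) (by omega) (by omega) (by omega) hpos (by omega)
        (by omega)
  obtain ⟨u04, u23', u5, uz⟩ := in_eqs hu ou
  have utop : ¬ (u 0 = s ∧ u (l + 3) = 0) := by
    rintro ⟨h1, h2⟩
    have := rk_top ou h1 h2
    rcases hlt with h | ⟨h, _⟩ <;> omega
  have ru := rk_mid (s := s) ou utop
  have move4 : v (l + 4) < u (l + 4) → v (l + 3) + v (l + 4) < s →
      ∃ a b, a < l + 6 ∧ b < l + 6 ∧ a ≠ b ∧ v a < u a ∧ 0 < v b ∧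
      Feas l s (mv v a b) ∧
      (rk l s (mv v a b) < rk l s v ∨ (rk l s (mv v a b) = rk l s v ∧ b < a)) := by
    intro h4 h34
    refine ⟨l + 4, 0, by omega, by omega, by omega, h4, by omega, fe40 (by omega) (by omega),
      Or.inr ⟨?_, by omega⟩⟩
    rw [rv, rk_mid (stayIn _ _ (by omega)) (by simp [mv]; omega)]
    simp [mv]
  by_cases r : u (l + 3) < v (l + 3)
  · by_cases e : v 0 = s ∧ v (l + 3) = 1
    · exact move4 (by omega) (by omega)
    · refine ⟨l + 2, l + 3, by omega, by omega, by omega, by omega, by omega, ?_, Or.inl ?_⟩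
      · apply mv_feas hv
        · omega
        · omega
        · omega
        · omega
        · omega
        · intro a' ha' _
          obtain rfl : a' = l + 1 := by omega
          have := vz (l + 1) (by omega) (by omega)
          omega
        · omega
        · omega
      · rw [rv, rk_mid (stayIn _ _ (by omega)) (by simp [mv]; omega)]
        simp [mv]
        omega
  rcases hlt with h | ⟨h, k, hk, hk', heq⟩
  · omega
  · obtain ⟨b0, hb0, hb0'⟩ := below hu hv hk hk' heq
    obtain rfl | rfl | rfl | rfl | rfl | hh : k = l + 5 ∨ k = l + 4 ∨ k = l + 3 ∨ k = l + 2 ∨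
      k = 0 ∨ (1 ≤ k ∧ k ≤ l + 1) := by omega
    · omega
    · exact move4 hk' (by omega)
    · omega
    · omega
    · omega
    · have := uz k hh.1 hh.2
      omega

lemma exch {l s : ℕ} (hs : 2 ≤ s) {u v : ℕ → ℕ} (hu : Feas l s u) (hv : Feas l s v)
    (hlt : rk l s u < rk l s v ∨ (rk l s u = rk l s v ∧
      ∃ k, k < l + 6 ∧ v k < u k ∧ ∀ j, k < j → j < l + 6 → u j = v j)) :
    ∃ a b, a < l + 6 ∧ b < l + 6 ∧ a ≠ b ∧ v a < u a ∧ 0 < v b ∧ Feas l s (mv v a b) ∧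
      (rk l s (mv v a b) < rk l s v ∨ (rk l s (mv v a b) = rk l s v ∧ b < a)) := by
  by_cases ov : Out l v
  · have rv := rk_out (s := s) ov
    rcases hlt with h | ⟨h, k, hk, hk', heq⟩
    · omega
    have ou : Out l u := by
      by_contra ou
      by_cases h' : u 0 = s ∧ u (l + 3) = 0
      · have := rk_top ou h'.1 h'.2
        omega
      · have := rk_mid ou h'
        omega
    obtain ⟨a, b, h1, h2, h3, h4, h5, h6⟩ := exch_out hs hu hv ou ov hk hk' heq
    exact ⟨a, b, h1, by omega, by omega, h3, h4, h5, Or.inr ⟨by rw [rk_out h6, rv], h2⟩⟩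
  · exact exch_in hs hu hv ov hlt

def AdjN (l i j : ℕ) : Prop :=
  (i + 2 ≤ j ∧ j ≤ l + 4 ∧ ¬ (i = 0 ∧ j = l + 4)) ∨ (j = l + 5 ∧ i ≤ l + 2) ∨
  (j + 2 ≤ i ∧ i ≤ l + 4 ∧ ¬ (j = 0 ∧ i = l + 4)) ∨ (i = l + 5 ∧ j ≤ l + 2)

lemma addE {l s i j : ℕ} {f f' : ℕ → ℕ} (hf : Feas l s f') (hi : i < l + 6) (hj : j < l + 6)
    (h : AdjN l i j)
    (hff : ∀ x, f x = f' x + (if x = i then 1 else 0) + (if x = j then 1 else 0)) :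
    Feas l (s + 1) f := by
  unfold AdjN at h
  refine ⟨?_, ?_, ?_, ?_⟩
  · intro c hc
    have := hf.pair c hc
    rw [hff, hff]
    split_ifs <;> omega
  · have := hf.wrap
    rw [hff, hff]
    split_ifs <;> omega
  · have := hf.tri
    rw [hff, hff, hff]
    split_ifs <;> omega
  · have := hf.sum
    simp only [hff, Finset.sum_add_distrib, Finset.sum_ite_eq', Finset.mem_range, hi, hj, if_true]
    omega

set_option maxHeartbeats 1000000 in
lemma subE {l s : ℕ} {f : ℕ → ℕ} (hf : Feas l (s + 1) f) : ∃ i j, i < l + 6 ∧ j < l + 6 ∧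
    AdjN l i j ∧ ∃ f', Feas l s f' ∧
      ∀ x, f x = f' x + (if x = i then 1 else 0) + (if x = j then 1 else 0) := by
  obtain ⟨σ, hσ⟩ : ∃ σ : ℕ → ℕ, σ = fun p => if p = l + 4 then l + 5 else if p = l + 5 then l + 4 else p :=
    ⟨_, rfl⟩
  obtain ⟨P, hP⟩ : ∃ P : ℕ → ℕ, P = fun j => ∑ i ∈ Finset.range j, f (σ i) := ⟨_, rfl⟩
  have P0 : P 0 = 0 := by simp [hP]
  have PS : ∀ j, P (j + 1) = P j + f (σ j) := by
    intro j
    simp [hP, Finset.sum_range_succ]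
  have Pmono : Monotone P := monotone_nat_of_le_succ (fun j => by rw [PS]; omega)
  have σle : ∀ p, p ≤ l + 3 → σ p = p := by
    intro p hp
    simp only [hσ]
    split_ifs <;> omega
  have σ4 : σ (l + 4) = l + 5 := by simp [hσ]
  have σ5 : σ (l + 5) = l + 4 := by simp [hσ]
  have Ptot : P (l + 6) = 2 * (s + 1) := by
    have h1 := hf.sum
    rw [PS, PS, σ4, σ5]
    rw [Finset.sum_range_succ, Finset.sum_range_succ] at h1
    have : P (l + 4) = ∑ x ∈ Finset.range (l + 4), f x := by
      rw [hP]
      apply Finset.sum_congr rfl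
      intro x hx
      rw [σle x (by have := Finset.mem_range.1 hx; omega)]
    omega
  have ex1 : ∃ p, 0 < P (p + 1) := ⟨l + 5, by rw [Ptot]; omega⟩
  have ex2 : ∃ p, s + 1 < P (p + 1) := ⟨l + 5, by rw [Ptot]; omega⟩
  obtain ⟨i0, hi0, hi0'⟩ : ∃ i0, P i0 = 0 ∧ 0 < P (i0 + 1) := by
    classical
    refine ⟨Nat.find ex1, ?_, Nat.find_spec ex1⟩
    rcases h : Nat.find ex1 with _ | k
    · exact P0
    · have := Nat.find_min ex1 (m := k) (by omega)
      omega
  obtain ⟨j0, hj0, hj0'⟩ : ∃ j0, P j0 ≤ s + 1 ∧ s + 1 < P (j0 + 1) := by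
    classical
    refine ⟨Nat.find ex2, ?_, Nat.find_spec ex2⟩
    rcases h : Nat.find ex2 with _ | k
    · omega
    · have := Nat.find_min ex2 (m := k) (by omega)
      omega
  clear ex1 ex2
  have ltof : ∀ a b, P a < P b → a < b := fun a b h => Pmono.reflect_lt h
  have hij : i0 ≤ j0 := by
    have := ltof i0 (j0 + 1) (by omega)
    omega
  have hj6 : j0 < l + 6 := ltof _ _ (by omega)
  -- intervals
  have int1 : ∀ lo hi, lo ≤ i0 → j0 < hi → P hi ≤ P lo + (s + 1) → False := by
    intro lo hi h1 h2 h3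
    have := Pmono h1
    have := Pmono (show j0 + 1 ≤ hi from h2)
    omega
  have int2 : ∀ lo hi, hi ≤ l + 6 → P hi = P lo + (s + 1) → (lo ≤ i0 ∧ i0 < hi) ∨ (lo ≤ j0 ∧ j0 < hi) := by
    intro lo hi h1 h2
    have h3 := Pmono h1
    have a1 : i0 < hi := ltof _ _ (by omega)
    by_cases h : lo ≤ i0
    · exact Or.inl ⟨h, a1⟩
    right
    have := Pmono (show i0 + 1 ≤ lo by omega)
    constructor
    · have := ltof lo (j0 + 1) (by omega)
      omega
    · exact ltof _ _ (by omega)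
  have pairs : ∀ c, c ≤ l + 2 → P (c + 2) = P c + (f c + f (c + 1)) := by
    intro c hc
    rw [PS, PS, σle c (by omega), σle (c + 1) (by omega)]
    omega
  have tri : P (l + 6) = P (l + 3) + (f (l + 3) + f (l + 4) + f (l + 5)) := by
    rw [PS, PS, PS, σle (l + 3) (by omega), σ4, σ5]
    omega
  have last : P (l + 6) = P (l + 5) + f (l + 4) := by rw [PS, σ5]
  have first : P 1 = f 0 := by
    have := PS 0
    rw [σle 0 (by omega)] at this
    simpa [P0] using this
  have hft := hf.tri
  have hfw := hf.wrap
  have hfp := hf.pair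
  have nopair : ∀ c, c ≤ l + 2 → c ≤ i0 → j0 < c + 2 → False := by
    intro c hc h1 h2
    have := hfp c (by omega)
    have := pairs c hc
    exact int1 c (c + 2) h1 h2 (by omega)
  have notri : l + 3 ≤ i0 → False := by
    intro h
    exact int1 (l + 3) (l + 6) h hj6 (by omega)
  have nowrap : i0 = 0 → j0 = l + 5 → False := by
    rintro rfl rfl
    have : P (0 + 1) = P 1 := rfl
    omega
  have adj : AdjN l (σ i0) (σ j0) := by
    rw [σle i0 (by by_contra; exact notri (by omega))]
    have hi2 : i0 ≤ l + 2 := by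
      by_contra
      exact notri (by omega)
    have h2 : i0 + 2 ≤ j0 := by
      by_contra
      exact nopair i0 hi2 le_rfl (by omega)
    unfold AdjN
    obtain h | h | h : j0 ≤ l + 3 ∨ j0 = l + 4 ∨ j0 = l + 5 := by omega
    · rw [σle j0 h]
      omega
    · rw [h, σ4]
      omega
    · rw [h, σ5]
      have : i0 ≠ 0 := fun h0 => nowrap h0 h
      omega
  have σlt : ∀ p, p < l + 6 → σ p < l + 6 := by
    intro p hp
    simp only [hσ]
    split_ifs <;> omega
  have fi : 0 < f (σ i0) := by
    have := PS i0
    omega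
  have fj : 0 < f (σ j0) := by
    have := PS j0
    omega
  have hne : σ i0 ≠ σ j0 := by
    unfold AdjN at adj
    omega
  refine ⟨σ i0, σ j0, σlt _ (by omega), σlt _ hj6, adj, 
    fun x => f x - (if x = σ i0 then 1 else 0) - (if x = σ j0 then 1 else 0), ?_, ?_⟩
  swap
  · intro x
    by_cases h1 : x = σ i0
    · subst h1
      simp [hne]
      omega
    · by_cases h2 : x = σ j0
      · subst h2
        simp [hne.symm]
        omega
      · simp [h1, h2]
  have i3 : i0 ≤ l + 3 := by
    by_contra
    exact notri (by omega)
  have ei : σ i0 = i0 := σle i0 i3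
  have ej : σ j0 = if j0 = l + 4 then l + 5 else if j0 = l + 5 then l + 4 else j0 := by simp [hσ]
  have trigoal : (f (l + 3) - (if l + 3 = σ i0 then 1 else 0) - (if l + 3 = σ j0 then 1 else 0)) +
      (f (l + 4) - (if l + 4 = σ i0 then 1 else 0) - (if l + 4 = σ j0 then 1 else 0)) +
      (f (l + 5) - (if l + 5 = σ i0 then 1 else 0) - (if l + 5 = σ j0 then 1 else 0)) ≤ s := by
    by_cases ht : f (l + 3) + f (l + 4) + f (l + 5) = s + 1
    · have := int2 (l + 3) (l + 6) (by omega) (by omega)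
      grind
    · omega
  refine ⟨?_, ?_, trigoal, ?_⟩
  · intro c hc
    by_cases hc' : c = l + 3
    · subst hc'
      show (f (l + 3) - (if l + 3 = σ i0 then 1 else 0) - (if l + 3 = σ j0 then 1 else 0)) +
        (f (l + 4) - (if l + 4 = σ i0 then 1 else 0) - (if l + 4 = σ j0 then 1 else 0)) ≤ s
      omega
    · by_cases ht : f c + f (c + 1) = s + 1
      · have h := int2 c (c + 2) (by omega) (by rw [pairs c (by omega), ht])
        show (f c - (if c = σ i0 then 1 else 0) - (if c = σ j0 then 1 else 0)) +
          (f (c + 1) - (if c + 1 = σ i0 then 1 else 0) - (if c + 1 = σ j0 then 1 else 0)) ≤ s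
        rcases h with h | h
        · obtain h | h : i0 = c ∨ i0 = c + 1 := by omega
          · rw [ei, h] at fi ⊢
            have e1 : (if c = c then 1 else 0) = 1 := if_pos rfl
            omega
          · rw [ei, h] at fi ⊢
            have e1 : (if c + 1 = c + 1 then 1 else 0) = 1 := if_pos rfl
            omega
        · obtain h | h : j0 = c ∨ j0 = c + 1 := by omega
          · have e : σ j0 = c := by rw [σle j0 (by omega), h]
            rw [e] at fj ⊢
            have e1 : (if c = c then 1 else 0) = 1 := if_pos rfl
            omega
          · have e : σ j0 = c + 1 := by rw [σle j0 (by omega), h]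
            rw [e] at fj ⊢
            have e1 : (if c + 1 = c + 1 then 1 else 0) = 1 := if_pos rfl
            omega
      · have := hfp c hc
        show (f c - (if c = σ i0 then 1 else 0) - (if c = σ j0 then 1 else 0)) +
          (f (c + 1) - (if c + 1 = σ i0 then 1 else 0) - (if c + 1 = σ j0 then 1 else 0)) ≤ s
        omega
  · show (f 0 - (if 0 = σ i0 then 1 else 0) - (if 0 = σ j0 then 1 else 0)) +
          (f (l + 4) - (if l + 4 = σ i0 then 1 else 0) - (if l + 4 = σ j0 then 1 else 0)) ≤ s
    by_cases ht : f 0 + f (l + 4) = s + 1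
    · by_cases h0 : i0 = 0
      · rw [ei, h0]
        rw [ei, h0] at fi
        have e1 : (if 0 = 0 then 1 else 0) = 1 := if_pos rfl
        omega
      · have h00 : f 0 = 0 := by
          have := Pmono (show 1 ≤ i0 by omega)
          omega
        have := int2 (l + 5) (l + 6) (by omega) (by omega)
        have e : σ j0 = l + 4 := by
          obtain h : j0 = l + 5 := by omega
          rw [h, σ5]
        rw [e] at fj ⊢
        have e1 : (if l + 4 = l + 4 then 1 else 0) = 1 := if_pos rfl
        omega
    · omega
  · have h := hf.sum
    have ha' := Finset.mem_range.2 (σlt i0 (by omega))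
    have hb' : σ j0 ∈ (Finset.range (l + 6)).erase (σ i0) :=
      Finset.mem_erase.2 ⟨hne.symm, Finset.mem_range.2 (σlt j0 hj6)⟩
    rw [← Finset.add_sum_erase _ _ ha', ← Finset.add_sum_erase _ _ hb'] at h ⊢
    have e : ∑ x ∈ ((Finset.range (l + 6)).erase (σ i0)).erase (σ j0),
        (f x - (if x = σ i0 then 1 else 0) - (if x = σ j0 then 1 else 0)) =
        ∑ x ∈ ((Finset.range (l + 6)).erase (σ i0)).erase (σ j0), f x := by
      apply Finset.sum_congr rfl
      intro x hx
      simp only [Finset.mem_erase] at hx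
      simp [hx.1, hx.2.1]
    rw [e]
    simp only [hne, hne.symm, if_true, if_false]
    omega

lemma colon_lin {K : Type*} [Field K] {n : ℕ} (A : Set (Fin n →₀ ℕ)) (d : Fin n →₀ ℕ)
    (h : ∀ u ∈ A, ∃ a, d a < u a ∧ ∃ w ∈ A, w ≤ d + Finsupp.single a 1) :
    ∃ V : Set (Fin n),
      Submodule.colon
        (Ideal.span ((fun s => monomial s (1 : K)) '' A))
        (Ideal.span {monomial d (1 : K)}) =
      Ideal.span ((fun v : Fin n => (X v : MvPolynomial (Fin n) K)) '' V) := by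
  refine ⟨{a | ∃ w ∈ A, w ≤ d + Finsupp.single a 1}, ?_⟩
  ext p
  rw [Ideal.mem_colon_span_singleton, mem_ideal_span_monomial_image]
  have e := @mem_ideal_span_X_image (Fin n) K _ p {a | ∃ w ∈ A, w ≤ d + Finsupp.single a 1}
  refine Iff.trans ?_ e.symm
  have hsupp : ∀ m, m ∈ p.support ↔ m + d ∈ (p * monomial d (1 : K)).support := by
    intro m
    rw [mem_support_iff, mem_support_iff, coeff_mul_monomial, mul_one]
  constructor
  · intro H m hm
    obtain ⟨u, hu, hle⟩ := H (m + d) ((hsupp m).1 hm)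
    obtain ⟨a, ha, w, hw, hw'⟩ := h u hu
    refine ⟨a, ⟨w, hw, hw'⟩, ?_⟩
    have := hle a
    rw [Finsupp.add_apply] at this
    omega
  · intro H m hm
    rw [mem_support_iff, coeff_mul_monomial'] at hm
    split_ifs at hm with hd
    · obtain ⟨a, ⟨w, hw, hw'⟩, ha⟩ := H (m - d) (mem_support_iff.2 (by simpa using hm))
      refine ⟨w, hw, hw'.trans ?_⟩
      intro x
      have h1 := hd x
      rw [Finsupp.add_apply, Finsupp.single_apply]
      rw [Finsupp.tsub_apply] at ha
      split_ifs with hx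
      · subst hx
        omega
      · omega
    · exact absurd rfl hm

def QQ {n : ℕ} (E : Set (Fin n →₀ ℕ)) : ℕ → Set (Fin n →₀ ℕ)
  | 0 => {0}
  | s + 1 => {d | ∃ a ∈ QQ E s, ∃ e ∈ E, d = a + e}

lemma pow_span (K : Type*) [Field K] {n : ℕ} (E : Set (Fin n →₀ ℕ)) (s : ℕ) :
    (Ideal.span ((fun s => monomial s (1 : K)) '' E)) ^ s =
      Ideal.span ((fun s => monomial s (1 : K)) '' (QQ E s)) := by
  induction s with
  | zero =>
    simp [QQ]
  | succ s ih =>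
    rw [pow_succ, ih, Ideal.span_mul_span']
    congr 1
    ext p
    rw [Set.mem_mul]
    constructor
    · rintro ⟨_, ⟨a, ha, rfl⟩, _, ⟨e, he, rfl⟩, rfl⟩
      exact ⟨a + e, ⟨a, ha, e, he, rfl⟩, by simp [monomial_mul]⟩
    · rintro ⟨_, ⟨a, ha, e, he, rfl⟩, rfl⟩
      exact ⟨_, ⟨a, ha, rfl⟩, _, ⟨e, he, rfl⟩, by simp [monomial_mul]⟩

def extN {n : ℕ} (d : Fin n →₀ ℕ) : ℕ → ℕ := fun i => if h : i < n then d ⟨i, h⟩ else 0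

lemma extN_val {n : ℕ} (d : Fin n →₀ ℕ) (i : Fin n) : extN d i.val = d i := by
  simp [extN]

lemma extN_sum {n : ℕ} (d : Fin n →₀ ℕ) : ∑ i ∈ Finset.range n, extN d i = ∑ i, d i := by
  rw [Finset.sum_range]
  simp [extN_val]

lemma extN_add {n : ℕ} (a : Fin n →₀ ℕ) (i j : Fin n) (x : ℕ) :
    extN (a + (Finsupp.single i 1 + Finsupp.single j 1)) x =
      extN a x + (if x = i.val then 1 else 0) + (if x = j.val then 1 else 0) := by
  unfold extN
  by_cases hx : x < n
  · simp only [hx, dif_pos, Finsupp.add_apply, Finsupp.single_apply, Fin.ext_iff]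
    rw [add_assoc]
    simp only [eq_comm]
  · have h1 : x ≠ i.val := by omega
    have h2 : x ≠ j.val := by omega
    simp [hx, h1, h2]

lemma QQ_iff {l : ℕ} (E : Set (Fin (l + 6) →₀ ℕ))
    (hE : ∀ e, e ∈ E ↔ ∃ i j : Fin (l + 6), AdjN l i.val j.val ∧
      e = Finsupp.single i 1 + Finsupp.single j 1) (s : ℕ) :
    ∀ d, d ∈ QQ E s ↔ Feas l s (extN d) := by
  induction s with
  | zero =>
    intro d
    constructor
    · intro h
      obtain rfl : d = 0 := h
      have : extN (0 : Fin (l + 6) →₀ ℕ) = fun _ => 0 := by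
        funext x
        simp [extN]
      rw [this]
      exact ⟨by simp, by simp, by simp, by simp⟩
    · intro h
      have h1 := h.sum
      rw [extN_sum] at h1
      show d = 0
      ext i
      simp only [mul_zero, Finset.sum_eq_zero_iff, Finset.mem_univ, forall_const] at h1
      exact h1 i
  | succ s ih =>
    intro d
    constructor
    · rintro ⟨a, ha, e, he, rfl⟩
      obtain ⟨i, j, hij, rfl⟩ := (hE e).1 he
      exact addE ((ih a).1 ha) i.2 j.2 hij (extN_add a i j)
    · intro h
      obtain ⟨i, j, hi, hj, hij, f', hf', hff⟩ := subE h
      have hd : d = Finsupp.equivFunOnFinite.symm (fun x : Fin (l + 6) => f' x.val) +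
          (Finsupp.single ⟨i, hi⟩ 1 + Finsupp.single ⟨j, hj⟩ 1) := by
        ext x
        rw [← extN_val d, ← extN_val, extN_add, hff, extN_val]
        rfl
      refine ⟨_, (ih _).2 ?_, _, (hE _).2 ⟨⟨i, hi⟩, ⟨j, hj⟩, hij, rfl⟩, hd⟩
      convert hf' using 1
      funext x
      by_cases hx : x < l + 6
      · simp [extN, hx]
      · have := hff x
        have h0 : extN d x = 0 := by simp [extN, hx]
        simp only [extN, hx, dif_neg, not_false_eq_true]
        omega

lemma eq_of_le_sum {n : ℕ} {a d : Fin n →₀ ℕ} (h : a ≤ d) (hs : ∑ i, a i = ∑ i, d i) : a = d := by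
  ext i
  exact (Finset.sum_eq_sum_iff_of_le (fun i _ => h i)).1 hs i (Finset.mem_univ i)

lemma minGen_iff {K : Type*} [Field K] {n t : ℕ} (F : Set (Fin n →₀ ℕ))
    (hF : ∀ d ∈ F, ∑ i, d i = t) (d : Fin n →₀ ℕ) :
    IsMinGen (Ideal.span ((fun s => monomial s (1 : K)) '' F)) d ↔ d ∈ F := by
  have hm : ∀ e : Fin n →₀ ℕ, monomial e (1 : K) ∈ Ideal.span ((fun s => monomial s (1 : K)) '' F) ↔
      ∃ a ∈ F, a ≤ e := by
    intro e
    rw [mem_ideal_span_monomial_image]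
    classical
    simp [support_monomial]
  unfold IsMinGen
  simp only [hm]
  constructor
  · rintro ⟨⟨a, ha, had⟩, h2⟩
    by_cases h : a = d
    · exact h ▸ ha
    · exact absurd ⟨a, ha, le_rfl⟩ (h2 a had h)
  · intro hd
    refine ⟨⟨d, hd, le_rfl⟩, ?_⟩
    rintro e hed hne ⟨a, ha, hae⟩
    have := eq_of_le_sum (hae.trans hed) ((hF a ha).trans (hF d hd).symm)
    subst this
    exact hne (le_antisymm hed hae)

/-- sorting key -/
def kap (l s : ℕ) (d : Fin (l + 6) →₀ ℕ) : ℕ ×ₗ (Colex (Fin (l + 6) → ℕ))ᵒᵈ :=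
  toLex (rk l s (extN d), OrderDual.toDual (toColex (fun i => d i)))

lemma kap_inj (l s : ℕ) : Function.Injective (kap l s) := by
  intro a b h
  have h2 : (toColex (fun i => a i)) = toColex (fun i => b i) :=
    congrArg (fun z => OrderDual.ofDual (ofLex z).2) h
  ext i
  exact congrFun h2 i

lemma kap_lt (l s : ℕ) (u v : Fin (l + 6) →₀ ℕ) : kap l s u < kap l s v ↔
    (rk l s (extN u) < rk l s (extN v) ∨ (rk l s (extN u) = rk l s (extN v) ∧
      ∃ k, k < l + 6 ∧ extN v k < extN u k ∧ ∀ j, k < j → j < l + 6 → extN u j = extN v j)) := by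
  unfold kap
  rw [Prod.Lex.toLex_lt_toLex]
  refine or_congr Iff.rfl (and_congr Iff.rfl ?_)
  show OrderDual.toDual (toColex (fun i => u i)) < OrderDual.toDual (toColex (fun i => v i)) ↔ _
  rw [OrderDual.toDual_lt_toDual]
  constructor
  · rintro ⟨i, h1, h2⟩
    refine ⟨i.val, i.2, ?_, ?_⟩
    · rw [extN_val, extN_val]
      exact h2
    · intro j hj hj'
      have := h1 ⟨j, hj'⟩ hj
      simp only [extN, hj', dif_pos]
      exact this.symm
  · rintro ⟨k, hk, h1, h2⟩
    refine ⟨⟨k, hk⟩, ?_, ?_⟩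
    · intro j hj
      have := h2 j.val hj j.2
      rw [extN_val, extN_val] at this
      exact this.symm
    · simp only [extN, hk, dif_pos] at h1
      exact h1

lemma exists_sorted_s2 {α β : Type*} [LinearOrder β] (κ : α → β) (hκ : Function.Injective κ)
    (F : Set α) (hF : F.Finite) : ∃ L : List α, L.Nodup ∧ (∀ d, d ∈ L ↔ d ∈ F) ∧
      ∀ i j : Fin L.length, κ (L.get i) < κ (L.get j) ↔ i < j := by
  classical
  let r : α → α → Prop := fun a b => κ a ≤ κ b
  haveI : IsTrans α r := ⟨fun _ _ _ h1 h2 => le_trans (α := β) h1 h2⟩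
  haveI : Std.Antisymm r := ⟨fun _ _ h1 h2 => hκ (le_antisymm h1 h2)⟩
  haveI : Std.Total r := ⟨fun a b => le_total (κ a) (κ b)⟩
  have hp := Finset.pairwise_sort hF.toFinset r
  have hn := Finset.sort_nodup hF.toFinset r
  have key : ∀ i j : Fin (hF.toFinset.sort r).length, i < j →
      κ ((hF.toFinset.sort r).get i) < κ ((hF.toFinset.sort r).get j) := by
    intro i j hij
    refine lt_of_le_of_ne (List.pairwise_iff_get.1 hp i j hij) ?_
    intro h
    exact hij.ne (hn.injective_get (hκ h))
  refine ⟨hF.toFinset.sort r, hn, ?_, ?_⟩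
  · intro d
    rw [Finset.mem_sort, Set.Finite.mem_toFinset]
  · intro i j
    refine ⟨fun h => ?_, key i j⟩
    by_contra hc
    rcases eq_or_lt_of_le (not_lt.1 hc) with h' | h'
    · rw [h'] at h
      exact lt_irrefl _ h
    · exact lt_asymm h (key j i h')

lemma main_lq (K : Type*) [Field K] (l s : ℕ) (hs : 2 ≤ s) (I : Ideal (MvPolynomial (Fin (l + 6)) K))
    (hI : I = Ideal.span ((fun s => monomial s (1 : K)) '' {d | Feas l s (extN d)})) :
    HasLinearQuotients I := by
  right
  have hsum : ∀ d ∈ {d : Fin (l + 6) →₀ ℕ | Feas l s (extN d)}, ∑ i, d i = 2 * s := by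
    intro d hd
    have := Feas.sum hd
    rwa [extN_sum] at this
  have hfin : {d : Fin (l + 6) →₀ ℕ | Feas l s (extN d)}.Finite := by
    apply (Set.finite_Iic (Finsupp.equivFunOnFinite.symm (fun _ : Fin (l + 6) => 2 * s))).subset
    intro d hd i
    rw [← hsum d hd]
    exact Finset.single_le_sum (f := fun i => d i) (fun _ _ => Nat.zero_le _) (Finset.mem_univ i)
  obtain ⟨L, hL1, hL2, hL3⟩ := exists_sorted_s2 (kap l s) (kap_inj l s) _ hfin
  refine ⟨L, hL1, ?_, ?_⟩
  · intro d
    rw [hL2, hI, minGen_iff _ hsum]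
  intro i _
  have hset : {m : MvPolynomial (Fin (l + 6)) K |
          ∃ k : Fin L.length, k.val < i.val ∧ m = monomial (L.get k) 1} =
      (fun s => monomial s (1 : K)) '' {d | ∃ k : Fin L.length, k < i ∧ d = L.get k} := by
    ext m
    constructor
    · rintro ⟨k, hk, rfl⟩
      exact ⟨_, ⟨k, hk, rfl⟩, rfl⟩
    · rintro ⟨_, ⟨k, hk, rfl⟩, rfl⟩
      exact ⟨k, hk, rfl⟩
  rw [hset]
  apply colon_lin
  rintro u ⟨k, hk, rfl⟩
  have fu : Feas l s (extN (L.get k)) := (hL2 _).1 (List.get_mem L k)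
  have fv : Feas l s (extN (L.get i)) := (hL2 _).1 (List.get_mem L i)
  obtain ⟨a, b, ha, hb, hab, hlt, hpos, fw, hw⟩ :=
    exch hs fu fv ((kap_lt l s _ _).1 ((hL3 k i).2 hk))
  generalize L.get k = u at *
  generalize hv : L.get i = v at *
  let w : Fin (l + 6) →₀ ℕ := Finsupp.equivFunOnFinite.symm (fun x => mv (extN v) a b x.val)
  have ew : extN w = mv (extN v) a b := by
    funext x
    by_cases hx : x < l + 6
    · simp [extN, hx, w]
    · have h1 : x ≠ a := by omega
      have h2 : x ≠ b := by omega
      simp [extN, hx, mv, h1, h2]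
  refine ⟨⟨a, ha⟩, ?_, w, ?_, ?_⟩
  · simpa [extN, ha] using hlt
  · have hwL : w ∈ L := (hL2 w).2 (by show Feas l s (extN w); rw [ew]; exact fw)
    obtain ⟨k', hk'⟩ := List.mem_iff_get.1 hwL
    refine ⟨k', (hL3 k' i).1 ?_, hk'.symm⟩
    rw [hk', hv]
    refine (kap_lt l s w v).2 ?_
    rw [ew]
    rcases hw with h | ⟨h, hba⟩
    · exact Or.inl h
    · refine Or.inr ⟨h, a, ha, by simp [mv], ?_⟩
      intro j hj _
      have h1 : j ≠ a := by omega
      have h2 : j ≠ b := by omega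
      simp [mv, h1, h2]
  · intro x
    show mv (extN v) a b x.val ≤ _
    rw [Finsupp.add_apply, Finsupp.single_apply, ← extN_val v x]
    unfold mv
    by_cases hx : x.val = a
    · have : (⟨a, ha⟩ : Fin (l + 6)) = x := Fin.ext hx.symm
      simp [hx, this]
    · split_ifs <;> omega

lemma adj_iff (l : ℕ) (h0 : 0 < l + 6) (h1 : l + 6 - 1 < l + 6) (h2 : l + 6 - 2 < l + 6)
    (h3 : l + 6 - 3 < l + 6) (i j : Fin (l + 6)) :
    (((anticycle (l + 6)).deleteEdges
              {s(⟨l + 6 - 3, h3⟩, ⟨l + 6 - 1, h1⟩), s(⟨0, h0⟩, ⟨l + 6 - 2, h2⟩)}) ⊔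
            SimpleGraph.fromEdgeSet {s(⟨0, h0⟩, ⟨l + 6 - 1, h1⟩)}).Adj i j ↔
      AdjN l i.val j.val := by
  obtain ⟨i, hi⟩ := i
  obtain ⟨j, hj⟩ := j
  have e1 : l + 6 - 1 = l + 5 := rfl
  have e2 : l + 6 - 2 = l + 4 := rfl
  have e3 : l + 6 - 3 = l + 3 := rfl
  have m1 : ∀ i : ℕ, i < l + 6 →
      ((i = l + 5 ∧ (i + 1) % (l + 6) = 0) ∨ (i < l + 5 ∧ (i + 1) % (l + 6) = i + 1)) := by
    intro i hi
    by_cases h : i = l + 5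
    · subst h
      exact Or.inl ⟨rfl, Nat.mod_self _⟩
    · exact Or.inr ⟨by omega, Nat.mod_eq_of_lt (by omega)⟩
  have mi := m1 i hi
  have mj := m1 j hj
  clear m1
  simp only [SimpleGraph.sup_adj, SimpleGraph.deleteEdges_adj, SimpleGraph.fromEdgeSet_adj,
    Set.mem_insert_iff, Set.mem_singleton_iff, Sym2.eq_iff, anticycle, Fin.mk.injEq, ne_eq,
    e1, e2, e3]
  unfold AdjN
  generalize (i + 1) % (l + 6) = p at *
  generalize (j + 1) % (l + 6) = q at *
  clear e1 e2 e3 h0 h1 h2 h3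
  rcases mi with ⟨mi, rfl⟩ | ⟨mi, rfl⟩ <;> rcases mj with ⟨mj, rfl⟩ | ⟨mj, rfl⟩ <;>
    constructor <;> intro h <;> omega

/-- Lemma `lem-main`: for `n ≥ 6`, the graph `H_n` obtained from the anticycle on `[n]`
by removing the edges `{n-2, n}` and `{1, n-1}` and adding the edge `{1, n}` has
`I_{H_n}^s` with linear quotients for `s = 2, 3`.  (0-indexed: remove `{n-3, n-1}` and
`{0, n-2}`, add `{0, n-1}`.) -/
theorem Hn_square_cube_linear_quotients
    (K : Type*) [Field K] (n : ℕ) (hn : 6 ≤ n) :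
    ∀ s : ℕ, s = 2 ∨ s = 3 →
      HasLinearQuotients
        ((edgeIdeal K
          (((anticycle n).deleteEdges
              {s(⟨n - 3, by omega⟩, ⟨n - 1, by omega⟩), s(⟨0, by omega⟩, ⟨n - 2, by omega⟩)}) ⊔
            SimpleGraph.fromEdgeSet {s(⟨0, by omega⟩, ⟨n - 1, by omega⟩)})) ^ s) := by
  intro s hs
  obtain ⟨l, rfl⟩ : ∃ l, n = l + 6 := ⟨n - 6, by omega⟩
  apply main_lq K l s (by omega)
  have hI : edgeIdeal K
          (((anticycle (l + 6)).deleteEdges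
              {s(⟨l + 6 - 3, by omega⟩, ⟨l + 6 - 1, by omega⟩), s(⟨0, by omega⟩, ⟨l + 6 - 2, by omega⟩)}) ⊔
            SimpleGraph.fromEdgeSet {s(⟨0, by omega⟩, ⟨l + 6 - 1, by omega⟩)}) =
      Ideal.span ((fun s => monomial s (1 : K)) '' {e | ∃ i j : Fin (l + 6), AdjN l i.val j.val ∧
        e = Finsupp.single i 1 + Finsupp.single j 1}) := by
    unfold edgeIdeal
    congr 1
    ext p
    constructor
    · rintro ⟨i, j, hij, rfl⟩
      exact ⟨_, ⟨i, j, (adj_iff l _ _ _ _ i j).1 hij, rfl⟩, by simp [X, monomial_mul]⟩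
    · rintro ⟨_, ⟨i, j, hij, rfl⟩, rfl⟩
      exact ⟨i, j, (adj_iff l _ _ _ _ i j).2 hij, by simp [X, monomial_mul]⟩
  rw [hI, pow_span]
  congr 2
  ext d
  exact QQ_iff _ (fun e => Iff.rfl) s d
end
end
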